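/- arXiv:2209.01197 — 2 statements merged into one kernel-verified Lean document; each statement's English description precedes it below -/
import Mathlib

section
/- Let L_2G be the first-order language with a binary function symbol +, constant symbols 0 and 1, a binary relation symbol <, and a unary relation symbol Z. Let M and N be L_2G-structures such that in each structure: the universe equipped with the interpretations of +, 0, < is a divisible ordered abelian group, and the set defined by Z is an integer part whose least positive element equals the interpretation of 1. Then M and N are elementarily equivalent (they satisfy the same L_2G-sentences). In other words, the theory GG of divisible ordered abelian groups with a distinguished integer part with least positive element 1 is complete. -/
open FirstOrder

/-- The language `L_2G` with constants `0`, `1`, a binary function `+`, a unary relation `Z`,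
and a binary relation `<`. -/
def L2G : FirstOrder.Language where
  Functions n := match n with
    | 0 => Fin 2
    | 2 => Unit
    | _ => Empty
  Relations n := match n with
    | 1 => Unit
    | 2 => Unit
    | _ => Empty

namespace L2G

def zeroSym : L2G.Functions 0 := (0 : Fin 2)
def oneSym : L2G.Functions 0 := (1 : Fin 2)
def addSym : L2G.Functions 2 := Unit.unit
def zSym : L2G.Relations 1 := Unit.unit
def ltSym : L2G.Relations 2 := Unit.unit

variable {M : Type*} [L2G.Structure M]

/-- The interpretation of `+` in an `L2G`-structure. -/
def add (x y : M) : M := Language.Structure.funMap addSym ![x, y]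

/-- The interpretation of `0` in an `L2G`-structure. -/
def zero (M : Type*) [L2G.Structure M] : M := Language.Structure.funMap zeroSym ![]

/-- The interpretation of `1` in an `L2G`-structure. -/
def one (M : Type*) [L2G.Structure M] : M := Language.Structure.funMap oneSym ![]

/-- The interpretation of `<` in an `L2G`-structure. -/
def lt (x y : M) : Prop := Language.Structure.RelMap ltSym ![x, y]

/-- The interpretation of `Z` in an `L2G`-structure. -/
def inZ (x : M) : Prop := Language.Structure.RelMap zSym ![x]

/-- `n`-fold sum `x + ⋯ + x` in an `L2G`-structure. -/
def nsmul : ℕ → M → M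
  | 0, _ => zero M
  | n + 1, x => add x (nsmul n x)

/-- An `L2G`-structure is a model of `GG` if its universe with `+`, `0`, `<` is a divisible
ordered abelian group and `Z` defines an integer part whose least positive element is `1`. -/
def IsGGStructure (M : Type*) [L2G.Structure M] : Prop :=
  -- abelian group
  (∀ x y z : M, add (add x y) z = add x (add y z)) ∧
  (∀ x y : M, add x y = add y x) ∧
  (∀ x : M, add x (zero M) = x) ∧
  (∀ x : M, ∃ y : M, add x y = zero M) ∧
  -- linear order
  (∀ x : M, ¬ lt x x) ∧
  (∀ x y z : M, lt x y → lt y z → lt x z) ∧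
  (∀ x y : M, lt x y ∨ x = y ∨ lt y x) ∧
  -- compatibility of the order with addition
  (∀ x y z : M, lt x y → lt (add x z) (add y z)) ∧
  -- divisibility
  (∀ (x : M) (n : ℕ), 0 < n → ∃ y : M, nsmul n y = x) ∧
  -- Z defines a subgroup
  inZ (zero M) ∧
  (∀ x y : M, inZ x → inZ y → inZ (add x y)) ∧
  (∀ x y : M, inZ x → add x y = zero M → inZ y) ∧
  -- 1 is the least positive element of Z
  inZ (one M) ∧ lt (zero M) (one M) ∧
  (∀ x : M, inZ x → lt (zero M) x → ¬ lt x (one M)) ∧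
  -- Z is an integer part
  (∀ x : M, ∃ n : M, inZ n ∧ ¬ lt x n ∧ lt x (add n (one M)))

end L2G

/-!
Fraïssé's method, with "agreement up to finite precision" expressed by filters: if tuples of `M` and
`N` that agree to high enough precision satisfy the same atomic formulas, and agreement to high
precision can be extended by one more element, then `M` and `N` are elementarily equivalent.

Two tuples `x`, `x'` are compared through their integer parts and their fractional parts. For the
integer parts, the data are those of Presburger arithmetic, the signs of integral affine forms and
the residues modulo standard integers; for the fractional parts, the data are those of divisible
ordered groups with a constant `1`, just the signs of integral affine forms. An affine form at `x`
is `W + S` with `W` in the integer part and `S` a bounded combination of fractional parts; so `⌊S⌋`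
is one of finitely many standard integers `k`, and the sign of `W + S` and its membership in the
integer part can be read off from the signs of `W + k` and `S - k`.
-/

open Filter

section BackAndForth

open FirstOrder.Language

universe u v

variable (L : FirstOrder.Language.{u, v}) {M N : Type*} [L.Structure M] [L.Structure N]

/-- A back-and-forth system between `M` and `N` in the sense of Fraïssé: the members of `F n` are
the relations "agreeing to some finite precision" between `n`-tuples of `M` and of `N`. -/
structure BackAndForth (F : ∀ n, Filter ((Fin n → M) × (Fin n → N))) : Prop where
  neBot : (F 0).NeBot
  atomic {n : ℕ} {φ : L.BoundedFormula Empty n} : φ.IsAtomic →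
    ∀ᶠ p in F n, φ.Realize default p.1 ↔ φ.Realize default p.2
  forth {n : ℕ} {s : Set ((Fin (n + 1) → M) × (Fin (n + 1) → N))} : s ∈ F (n + 1) →
    ∀ᶠ p in F n, ∀ x, ∃ y, (Fin.snoc p.1 x, Fin.snoc p.2 y) ∈ s
  back {n : ℕ} {s : Set ((Fin (n + 1) → M) × (Fin (n + 1) → N))} : s ∈ F (n + 1) →
    ∀ᶠ p in F n, ∀ y, ∃ x, (Fin.snoc p.1 x, Fin.snoc p.2 y) ∈ s

namespace BackAndForth

variable {L} {F : ∀ n, Filter ((Fin n → M) × (Fin n → N))}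

theorem eventually_realize_iff (hF : BackAndForth L F) {n : ℕ} (φ : L.BoundedFormula Empty n) :
    ∀ᶠ p in F n, φ.Realize default p.1 ↔ φ.Realize default p.2 := by
  induction φ with
  | falsum => exact .of_forall fun _ => Iff.rfl
  | equal t₁ t₂ => exact hF.atomic (.equal t₁ t₂)
  | rel R ts => exact hF.atomic (.rel R ts)
  | imp φ ψ ihφ ihψ =>
    filter_upwards [ihφ, ihψ] with p hφ hψ
    simp only [BoundedFormula.realize_imp, hφ, hψ]
  | all φ ih =>
    filter_upwards [hF.forth ih, hF.back ih] with p forth back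
    simp only [BoundedFormula.realize_all]
    constructor
    · intro hφ y
      obtain ⟨x, hxy⟩ := back y
      exact hxy.1 (hφ x)
    · intro hφ x
      obtain ⟨y, hxy⟩ := forth x
      exact hxy.2 (hφ y)

theorem elementarilyEquivalent (hF : BackAndForth L F) : L.ElementarilyEquivalent M N := by
  refine elementarilyEquivalent_iff.2 fun φ => ?_
  have := hF.neBot
  obtain ⟨p, hp⟩ := (hF.eventually_realize_iff φ).exists
  rwa [Subsingleton.elim p.1 default, Subsingleton.elim p.2 default] at hp

end BackAndForth

end BackAndForth

section OrderedGroup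

variable {M N : Type*}

theorem denselyOrdered_of_divisibleBy [AddCommGroup M] [LinearOrder M] [IsOrderedAddMonoid M]
    [DivisibleBy M ℕ] : DenselyOrdered M where
  dense a b hab := by
    have half : 2 • DivisibleBy.div (a + b) 2 = a + b := DivisibleBy.div_cancel _ two_ne_zero
    refine ⟨DivisibleBy.div (a + b) 2, lt_of_nsmul_lt_nsmul_right 2 ?_,
      lt_of_nsmul_lt_nsmul_right 2 ?_⟩
    · rwa [half, two_nsmul, add_lt_add_iff_left]
    · rwa [half, two_nsmul, add_lt_add_iff_right]

theorem exists_forall_cmp_eq [LinearOrder M] [LinearOrder N] [DenselyOrdered N] [NoMinOrder N]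
    [NoMaxOrder N] [Nonempty N] {ι : Type*} (s : Finset ι) (f : ι → M) (g : ι → N)
    (hfg : ∀ i ∈ s, ∀ j ∈ s, cmp (f i) (f j) = cmp (g i) (g j)) (y : M) :
    ∃ y' : N, ∀ i ∈ s, cmp (f i) y = cmp (g i) y' := by
  classical
  by_cases hy : ∃ j ∈ s, f j = y
  · obtain ⟨j, hj, rfl⟩ := hy
    exact ⟨g j, fun i hi => hfg i hi j hj⟩
  push Not at hy
  obtain ⟨y', below, above⟩ := Order.exists_between_finsets
    ({i ∈ s | f i < y}.image g) ({i ∈ s | y < f i}.image g) (by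
      simp only [Finset.forall_mem_image, Finset.mem_filter]
      rintro i ⟨hi, hiy⟩ j ⟨hj, hjy⟩
      exact (lt_iff_lt_of_cmp_eq_cmp (hfg i hi j hj)).1 (hiy.trans hjy))
  simp only [Finset.forall_mem_image, Finset.mem_filter] at below above
  refine ⟨y', fun i hi => ?_⟩
  rcases (hy i hi).lt_or_gt with hlt | hgt
  · rw [(cmp_eq_lt_iff _ _).2 hlt, (cmp_eq_lt_iff _ _).2 (below ⟨hi, hlt⟩)]
  · rw [(cmp_eq_gt_iff _ _).2 hgt, (cmp_eq_gt_iff _ _).2 (above ⟨hi, hgt⟩)]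

theorem cmp_zsmul_zero_of_pos [AddCommGroup M] [LinearOrder M] [IsOrderedAddMonoid M] {c : ℤ}
    (hc : 0 < c) (x : M) : cmp (c • x) 0 = cmp x 0 := by
  simpa only [zsmul_zero] using (zsmul_strictMono_right M hc).cmp_map_eq x 0

theorem cmp_zsmul_zero_of_neg [AddCommGroup M] [LinearOrder M] [IsOrderedAddMonoid M] {c : ℤ}
    (hc : c < 0) (x : M) : cmp (c • x) 0 = cmp 0 x := by
  rw [← cmp_sub_zero 0 x, zero_sub, ← cmp_zsmul_zero_of_pos (neg_pos.2 hc) (-x), neg_smul_neg]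

theorem cmp_zero_eq_of_cmp_zsmul_zero_eq [AddCommGroup M] [LinearOrder M] [IsOrderedAddMonoid M]
    [AddCommGroup N] [LinearOrder N] [IsOrderedAddMonoid N] {c : ℤ} (hc : c ≠ 0) {x : M} {x' : N}
    (h : cmp (c • x) 0 = cmp (c • x') 0) : cmp x 0 = cmp x' 0 := by
  rcases hc.lt_or_gt with hc | hc
  · rw [cmp_zsmul_zero_of_neg hc, cmp_zsmul_zero_of_neg hc] at h
    exact cmp_eq_cmp_symm.1 h
  · rwa [cmp_zsmul_zero_of_pos hc, cmp_zsmul_zero_of_pos hc] at h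

theorem nsmul_intCast [AddCommGroupWithOne M] (n : ℕ) (k : ℤ) : n • (k : M) = (n * k : ℤ) := by
  rw [← zsmul_one k, ← natCast_zsmul, smul_smul, zsmul_one]

theorem exists_intCast_le_lt [AddCommGroupWithOne M] [LinearOrder M] [IsOrderedAddMonoid M]
    [ZeroLEOneClass M] [NeZero (1 : M)] {x : M} {a b : ℤ} (ha : a ≤ x) (hb : x < b) :
    ∃ k ∈ Finset.Ico a b, (k : M) ≤ x ∧ x < k + 1 := by
  obtain ⟨k, hk, hmax⟩ := Int.exists_greatest_of_bdd (P := fun k : ℤ => (k : M) ≤ x)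
    ⟨b, fun k hk => (Int.cast_lt.1 (hk.trans_lt hb)).le⟩ ⟨a, ha⟩
  refine ⟨k, Finset.mem_Ico.2 ⟨hmax a ha, Int.cast_lt.1 (hk.trans_lt hb)⟩, hk, ?_⟩
  by_contra! hle
  exact absurd (hmax (k + 1) (by exact_mod_cast hle)) (by omega)

theorem le_or_lt_of_abs_sub_le_abs_sub [AddCommGroup M] [LinearOrder M] [IsOrderedAddMonoid M]
    {a b y : M} (h : |y - a| ≤ |y - b|) (ha : a < y) : b ≤ a ∨ y < b := by
  by_contra! hb
  rw [abs_of_pos (sub_pos.2 ha), abs_of_nonneg (sub_nonneg.2 hb.2), sub_le_sub_iff_left] at h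
  exact h.not_gt hb.1

theorem le_or_lt_of_abs_sub_le_abs_sub' [AddCommGroup M] [LinearOrder M] [IsOrderedAddMonoid M]
    {a b y : M} (h : |y - a| ≤ |y - b|) (ha : y < a) : a ≤ b ∨ b < y := by
  by_contra! hb
  rw [abs_of_neg (sub_neg.2 ha), abs_of_nonpos (sub_nonpos.2 hb.2), neg_sub, neg_sub,
    sub_le_sub_iff_right] at h
  exact h.not_gt hb.1

end OrderedGroup

/-- A distinguished integer part `IntegerPart.integers M` of an ordered abelian group `M`, whose
least positive element is the constant `1` of `M`. -/
class IntegerPart (M : Type*) [AddCommGroupWithOne M] [LinearOrder M] where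
  /-- The subgroup which is the integer part. -/
  integers (M) : AddSubgroup M
  one_mem : 1 ∈ integers
  one_pos : (0 : M) < 1
  one_le_of_pos {x : M} : x ∈ integers → 0 < x → 1 ≤ x
  exists_mem_le_lt_add_one (x : M) : ∃ n ∈ integers, n ≤ x ∧ x < n + 1

namespace IntegerPart

variable {M : Type*} [AddCommGroupWithOne M] [LinearOrder M] [IntegerPart M] {x y : M}

instance : ZeroLEOneClass M := ⟨one_pos.le⟩

instance : NeZero (1 : M) := ⟨one_pos.ne'⟩

instance : Nontrivial M := nontrivial_of_lt 0 1 one_pos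

theorem intCast_mem (k : ℤ) : (k : M) ∈ integers M := by
  simpa only [zsmul_one] using zsmul_mem one_mem k

/-- The floor of `x` with respect to the distinguished integer part; the class `FloorRing` does not
apply, since its floors are standard integers. -/
noncomputable def floor (x : M) : M := (exists_mem_le_lt_add_one x).choose

/-- The fractional part of `x` with respect to the distinguished integer part. -/
noncomputable def fract (x : M) : M := x - floor x

theorem floor_mem (x : M) : floor x ∈ integers M := (exists_mem_le_lt_add_one x).choose_spec.1

theorem floor_add_fract (x : M) : floor x + fract x = x := add_sub_cancel _ _

variable [IsOrderedAddMonoid M]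

theorem fract_nonneg (x : M) : 0 ≤ fract x :=
  sub_nonneg.2 (exists_mem_le_lt_add_one x).choose_spec.2.1

theorem fract_lt_one (x : M) : fract x < 1 :=
  sub_lt_iff_lt_add'.2 (exists_mem_le_lt_add_one x).choose_spec.2.2

theorem add_one_le_of_lt (hx : x ∈ integers M) (hy : y ∈ integers M) (hxy : x < y) : x + 1 ≤ y :=
  le_sub_iff_add_le'.1 (one_le_of_pos (sub_mem hy hx) (sub_pos.2 hxy))

theorem eq_of_mem_of_le_of_lt_add_one (hx : x ∈ integers M) (hy : y ∈ integers M) (hxy : x ≤ y)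
    (hyx : y < x + 1) : x = y :=
  hxy.eq_of_not_lt fun hlt => hyx.not_ge (add_one_le_of_lt hx hy hlt)

theorem floor_add_of_mem (hx : x ∈ integers M) (hy₀ : 0 ≤ y) (hy₁ : y < 1) : floor (x + y) = x := by
  have lower := fract_nonneg (x + y)
  have upper := fract_lt_one (x + y)
  rw [fract, sub_nonneg] at lower
  rw [fract, sub_lt_iff_lt_add'] at upper
  rcases le_total x (floor (x + y)) with h | h
  · exact (eq_of_mem_of_le_of_lt_add_one hx (floor_mem _) h
      (lower.trans_lt (add_lt_add_right hy₁ x))).symm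
  · exact eq_of_mem_of_le_of_lt_add_one (floor_mem _) hx h
      ((le_add_of_nonneg_right hy₀).trans_lt upper)

theorem fract_add_of_mem (hx : x ∈ integers M) (hy₀ : 0 ≤ y) (hy₁ : y < 1) :
    fract (x + y) = y := by
  rw [fract, floor_add_of_mem hx hy₀ hy₁, add_sub_cancel_left]

theorem add_mem_iff_of_intCast_le_lt {w s : M} {k : ℤ} (hw : w ∈ integers M) (hk : k ≤ s)
    (hk' : s < k + 1) : w + s ∈ integers M ↔ s = k := by
  rw [add_mem_cancel_left hw]
  constructor
  · exact fun hs => (eq_of_mem_of_le_of_lt_add_one (intCast_mem k) hs hk hk').symm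
  · rintro rfl
    exact intCast_mem k

theorem cmp_add_zero_of_intCast_le_lt {w s : M} {k : ℤ} (hw : w ∈ integers M) (hk : k ≤ s)
    (hk' : s < k + 1) : cmp (w + s) 0 = (cmp (w + k) 0).then (cmp s k) := by
  rcases lt_trichotomy (w + k) 0 with hneg | hzero | hpos
  · have hle := add_one_le_of_lt (add_mem hw (intCast_mem k)) (zero_mem _) hneg
    have hlt : w + s < 0 := (add_lt_add_right hk' w).trans_le (by rwa [← add_assoc])
    rw [(cmp_eq_lt_iff _ _).2 hneg, (cmp_eq_lt_iff _ _).2 hlt, Ordering.lt_then]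
  · rw [eq_neg_of_add_eq_zero_left hzero, neg_add_cancel, cmp_self_eq_eq, Ordering.eq_then,
      neg_add_eq_sub, cmp_sub_zero]
  · have hlt : 0 < w + s := hpos.trans_le (add_le_add_right hk w)
    rw [(cmp_eq_gt_iff _ _).2 hpos, (cmp_eq_gt_iff _ _).2 hlt, Ordering.gt_then]

theorem exists_eq_intCast_add_nsmul [DivisibleBy M ℕ] {D : ℕ} (hD : D ≠ 0) {w : M}
    (hw : w ∈ integers M) :
    ∃ c ∈ Finset.Ico (0 : ℤ) D, ∃ z ∈ integers M, w = c + D • z := by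
  set t := DivisibleBy.div w D
  have ht : D • floor t + D • fract t = w := by
    rw [← nsmul_add, floor_add_fract, DivisibleBy.div_cancel _ hD]
  have lower : ((0 : ℤ) : M) ≤ D • fract t := by
    simpa using nsmul_nonneg (fract_nonneg t) D
  have upper : D • fract t < ((D : ℤ) : M) := by
    simpa using nsmul_lt_nsmul_right hD (fract_lt_one t)
  obtain ⟨c, hc, hc_le, lt_hc⟩ := exists_intCast_le_lt lower upper
  refine ⟨c, hc, floor t, floor_mem t, ?_⟩
  have hmem : D • fract t ∈ integers M := by
    rw [eq_sub_of_add_eq' ht]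
    exact sub_mem hw (nsmul_mem (floor_mem t) D)
  rw [eq_of_mem_of_le_of_lt_add_one (intCast_mem c) hmem hc_le lt_hc, add_comm, ht]

theorem natCast_dvd_of_nsmul_eq_intCast {D : ℕ} (hD : D ≠ 0) {c : ℤ} {z : M}
    (hz : z ∈ integers M) (h : D • z = c) : (D : ℤ) ∣ c := by
  have hD' : (0 : ℤ) < D := by positivity
  have lower : ((c / D : ℤ) : M) ≤ z := by
    refine le_of_nsmul_le_nsmul_right hD ?_
    rw [h, nsmul_intCast, Int.cast_le]
    exact Int.mul_ediv_self_le hD'.ne'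
  have upper : z < ((c / D : ℤ) : M) + 1 := by
    refine lt_of_nsmul_lt_nsmul_right D ?_
    rw [h, ← Int.cast_one, ← Int.cast_add, nsmul_intCast, Int.cast_lt, mul_add_one]
    exact Int.lt_mul_ediv_self_add hD'
  obtain rfl := eq_of_mem_of_le_of_lt_add_one (intCast_mem _) hz lower upper
  rw [nsmul_intCast] at h
  exact Dvd.intro _ (Int.cast_strictMono.injective h)

section Location

variable [DivisibleBy M ℕ] {D : ℕ}

theorem exists_pos_intCast_le_of_pos (hD : D ≠ 0) (hx : x ∈ integers M) (hpos : 0 < x) :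
    ∃ d ∈ Finset.Icc (1 : ℤ) D, (d : M) ≤ x ∧ ∃ z ∈ integers M, x = d + D • z := by
  obtain ⟨c, hc, z, hz, hxc⟩ := exists_eq_intCast_add_nsmul hD (sub_mem hx one_mem)
  rw [Finset.mem_Ico] at hc
  have hx_eq : x = (c + 1 : ℤ) + D • z := by
    rw [← sub_add_cancel x 1, hxc, Int.cast_add, Int.cast_one]
    abel
  have hz_nonneg : 0 ≤ z := by
    by_contra! hneg
    have hle : D • z ≤ D • (-1) :=
      nsmul_le_nsmul_right (le_neg_iff_add_nonpos_right.2 (add_one_le_of_lt hz (zero_mem _) hneg)) D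
    have hle' : x ≤ ((c + 1 : ℤ) : M) + D • (-1) := hx_eq.trans_le (add_le_add_right hle _)
    have hcast : ((c + 1 : ℤ) : M) + D • (-1) = (c + 1 - D : ℤ) := by
      rw [smul_neg, nsmul_one, ← sub_eq_add_neg, Int.cast_sub, Int.cast_natCast]
    have : 0 < c + 1 - D := Int.cast_pos.1 (hpos.trans_le (hle'.trans_eq hcast))
    omega
  refine ⟨c + 1, Finset.mem_Icc.2 (by omega), ?_, z, hz, hx_eq⟩
  rw [hx_eq]
  exact le_add_of_nonneg_right (nsmul_nonneg hz_nonneg D)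

theorem exists_neg_le_intCast_of_neg (hD : D ≠ 0) (hx : x ∈ integers M) (hneg : x < 0) :
    ∃ d ∈ Finset.Icc (-D : ℤ) (-1), x ≤ (d : M) ∧ ∃ z ∈ integers M, x = d + D • z := by
  obtain ⟨d, hd, hle, z, hz, h⟩ := exists_pos_intCast_le_of_pos hD (neg_mem hx) (neg_pos.2 hneg)
  rw [Finset.mem_Icc] at hd
  refine ⟨-d, Finset.mem_Icc.2 (by omega), ?_, -z, neg_mem hz, ?_⟩
  · rw [Int.cast_neg]
    exact le_neg_of_le_neg hle
  · rw [← neg_neg x, h, neg_add, Int.cast_neg, smul_neg]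

theorem exists_forall_cmp_add_intCast_eq {ι : Type*} {s : Finset ι} (hs : s.Nonempty) {f : ι → M}
    (hf : ∀ i ∈ s, f i ∈ integers M) (hy : y ∈ integers M) (hD : D ≠ 0) :
    ∃ i ∈ s, ∃ d ∈ Finset.Icc (-D : ℤ) D, (∃ z ∈ integers M, y = f i + d + D • z) ∧
      ∀ j ∈ s, cmp (f j) (f i + d) = cmp (f j) y := by
  obtain ⟨i, hi, closest⟩ := s.exists_min_image (fun i => |y - f i|) hs
  refine ⟨i, hi, ?_⟩
  rcases lt_trichotomy (y - f i) 0 with hneg | hzero | hpos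
  · obtain ⟨d, hd, hle, z, hz, h⟩ := exists_neg_le_intCast_of_neg hD (sub_mem hy (hf i hi)) hneg
    rw [Finset.mem_Icc] at hd
    refine ⟨d, Finset.mem_Icc.2 (by omega), ⟨z, hz, ?_⟩, fun j hj => ?_⟩
    · rw [add_assoc, ← h, add_sub_cancel]
    have hd_neg : (d : M) < 0 := Int.cast_lt_zero.2 (by omega)
    have hd_le : y ≤ f i + d := sub_le_iff_le_add'.1 hle
    have hd_lt : f i + d < f i := add_lt_of_neg_right _ hd_neg
    rcases le_or_lt_of_abs_sub_le_abs_sub' (closest j hj) (sub_neg.1 hneg) with hj' | hj'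
    · rw [(cmp_eq_gt_iff _ _).2 (hd_lt.trans_le hj'),
        (cmp_eq_gt_iff _ _).2 ((hd_le.trans_lt hd_lt).trans_le hj')]
    · rw [(cmp_eq_lt_iff _ _).2 (hj'.trans_le hd_le), (cmp_eq_lt_iff _ _).2 hj']
  · refine ⟨0, Finset.mem_Icc.2 (by omega), ⟨0, zero_mem _, ?_⟩, fun j _ => ?_⟩
    all_goals simp [sub_eq_zero.1 hzero]
  · obtain ⟨d, hd, hle, z, hz, h⟩ := exists_pos_intCast_le_of_pos hD (sub_mem hy (hf i hi)) hpos
    rw [Finset.mem_Icc] at hd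
    refine ⟨d, Finset.mem_Icc.2 (by omega), ⟨z, hz, ?_⟩, fun j hj => ?_⟩
    · rw [add_assoc, ← h, add_sub_cancel]
    have hd_pos : (0 : M) < d := Int.cast_pos.2 (by omega)
    have hd_le : f i + d ≤ y := le_sub_iff_add_le'.1 hle
    have hd_lt : f i < f i + d := lt_add_of_pos_right _ hd_pos
    rcases le_or_lt_of_abs_sub_le_abs_sub (closest j hj) (sub_pos.1 hpos) with hj' | hj'
    · rw [(cmp_eq_lt_iff _ _).2 (hj'.trans_lt hd_lt),
        (cmp_eq_lt_iff _ _).2 (hj'.trans_lt (hd_lt.trans_le hd_le))]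
    · rw [(cmp_eq_gt_iff _ _).2 (hd_le.trans_lt hj'), (cmp_eq_gt_iff _ _).2 hj']

end Location

end IntegerPart

/-- The integral affine form `a₀ + a₁ x₁ + ⋯ + aₙ xₙ`, given by `(a₀, a)`. -/
abbrev AffineForm (n : ℕ) : Type := ℤ × (Fin n → ℤ)

namespace AffineForm

variable {G : Type*} [AddCommGroupWithOne G] {n : ℕ}

/-- The value of an affine form at the tuple `x`. -/
def eval (x : Fin n → G) : AffineForm n →ₗ[ℤ] G :=
  (LinearMap.toSpanSingleton ℤ G 1).coprod (Fintype.linearCombination ℤ x)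

theorem eval_apply (x : Fin n → G) (a : AffineForm n) : eval x a = a.1 + ∑ i, a.2 i • x i := by
  simp [eval, Fintype.linearCombination_apply]

theorem eval_intCast (x : Fin n → G) (k : ℤ) : eval x (k, 0) = k := by simp [eval_apply]

theorem eval_single (x : Fin n → G) (i : Fin n) : eval x (0, Pi.single i 1) = x i := by
  simp [eval]

theorem eval_snoc (x : Fin n → G) (y : G) (a : AffineForm (n + 1)) :
    eval (Fin.snoc x y : Fin (n + 1) → G) a =
      eval x (a.1, Fin.init a.2) + a.2 (Fin.last n) • y := by
  simp [eval_apply, Fin.sum_univ_castSucc, Fin.init, add_assoc]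

theorem eval_add_left (x y : Fin n → G) (a : AffineForm n) :
    eval (x + y) a = eval x a + eval y (0, a.2) := by
  simp [eval_apply, Finset.sum_add_distrib, add_assoc]

theorem eval_mem {H : AddSubgroup G} (hone : 1 ∈ H) {x : Fin n → G} (hx : ∀ i, x i ∈ H)
    (a : AffineForm n) : eval x a ∈ H := by
  rw [eval_apply, ← zsmul_one]
  exact add_mem (zsmul_mem hone _) (sum_mem fun i _ => zsmul_mem (hx i) _)

theorem prodMk_eval_mem {G' : Type*} [AddCommGroupWithOne G'] {H : AddSubgroup (G × G')}
    (hone : 1 ∈ H) {x : Fin n → G} {x' : Fin n → G'} (hx : ∀ i, (x i, x' i) ∈ H)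
    (a : AffineForm n) : (eval x a, eval x' a) ∈ H := by
  have hsum : (eval x a, eval x' a) = a.1 • (1 : G × G') + ∑ i, a.2 i • (x i, x' i) := by
    ext <;> simp [eval_apply, Prod.fst_sum, Prod.snd_sum]
  rw [hsum]
  exact add_mem (zsmul_mem hone _) (sum_mem fun i _ => zsmul_mem (hx i) _)

theorem abs_eval_zero_le [LinearOrder G] [IsOrderedAddMonoid G] {x : Fin n → G}
    (hx : ∀ i, |x i| ≤ 1) (a : Fin n → ℤ) : |eval x (0, a)| ≤ (∑ i, |a i| : ℤ) := by
  rw [eval_apply, Int.cast_zero, zero_add, Int.cast_sum]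
  refine (Finset.abs_sum_le_sum_abs _ _).trans (Finset.sum_le_sum fun i _ => ?_)
  rw [abs_zsmul, ← zsmul_one]
  exact zsmul_le_zsmul_right (abs_nonneg _) (hx i)

end AffineForm

section Congruence

open IntegerPart

variable (M N : Type*) [AddCommGroupWithOne M] [LinearOrder M] [IntegerPart M]
  [AddCommGroupWithOne N] [LinearOrder N] [IntegerPart N]

/-- The pairs of integers of `M` and `N` that are congruent modulo `m` to the same standard integer,
as a subgroup of `M × N`. -/
def congruenceGraph (m : ℕ) : AddSubgroup (M × N) :=
  .zmultiples 1 ⊔ ((integers M).prod (integers N)).map (nsmulAddMonoidHom m)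

variable {M N} {m : ℕ} {x y : M} {x' y' : N}

theorem mem_congruenceGraph : (x, x') ∈ congruenceGraph M N m ↔
    ∃ c : ℤ, ∃ z ∈ integers M, ∃ z' ∈ integers N, x = c + m • z ∧ x' = c + m • z' := by
  simp only [congruenceGraph, AddSubgroup.mem_sup, AddSubgroup.exists_mem_zmultiples,
    AddSubgroup.mem_map, AddSubgroup.mem_prod, Prod.exists]
  constructor
  · rintro ⟨c, _, _, ⟨z, z', ⟨hz, hz'⟩, hu⟩, h⟩
    rw [← hu] at h
    obtain ⟨rfl, rfl⟩ := Prod.mk.inj h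
    exact ⟨c, z, hz, z', hz', by simp, by simp⟩
  · rintro ⟨c, z, hz, z', hz', rfl, rfl⟩
    exact ⟨c, _, _, ⟨z, z', ⟨hz, hz'⟩, rfl⟩, by ext <;> simp⟩

theorem one_mem_congruenceGraph : 1 ∈ congruenceGraph M N m :=
  AddSubgroup.mem_sup_left (AddSubgroup.mem_zmultiples 1)

theorem mem_integers_of_mem_congruenceGraph (h : (x, x') ∈ congruenceGraph M N m) :
    x ∈ integers M ∧ x' ∈ integers N := by
  obtain ⟨c, z, hz, z', hz', rfl, rfl⟩ := mem_congruenceGraph.1 h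
  exact ⟨add_mem (intCast_mem c) (nsmul_mem hz m), add_mem (intCast_mem c) (nsmul_mem hz' m)⟩

theorem congruenceGraph_anti {d : ℕ} (hd : d ∣ m) :
    congruenceGraph M N m ≤ congruenceGraph M N d := by
  rintro ⟨x, x'⟩ h
  obtain ⟨k, rfl⟩ := hd
  obtain ⟨c, z, hz, z', hz', rfl, rfl⟩ := mem_congruenceGraph.1 h
  exact mem_congruenceGraph.2 ⟨c, k • z, nsmul_mem hz k, k • z', nsmul_mem hz' k,
    by rw [mul_nsmul'], by rw [mul_nsmul']⟩

theorem exists_mem_congruenceGraph_of_nsmul [IsOrderedAddMonoid M] {l : ℕ} (hl : l ≠ 0)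
    (hy : y ∈ integers M) (h : (l • y, x') ∈ congruenceGraph M N (l * m)) :
    ∃ y' : N, l • y' = x' ∧ (y, y') ∈ congruenceGraph M N m := by
  obtain ⟨c, z, hz, z', hz', hyz, rfl⟩ := mem_congruenceGraph.1 h
  have hc : l • (y - m • z) = c := by rw [nsmul_sub, hyz, mul_nsmul', add_sub_cancel_right]
  obtain ⟨k, rfl⟩ := natCast_dvd_of_nsmul_eq_intCast hl (sub_mem hy (nsmul_mem hz m)) hc
  rw [← nsmul_intCast] at hc ⊢
  refine ⟨k + m • z', by rw [nsmul_add, mul_nsmul'], mem_congruenceGraph.2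
    ⟨k, z, hz, z', hz', ?_, rfl⟩⟩
  rw [← nsmul_right_injective hl hc, sub_add_cancel]

end Congruence

section OrderFilter

open AffineForm

variable (M N : Type*) [AddCommGroupWithOne M] [LinearOrder M] [AddCommGroupWithOne N]
  [LinearOrder N]

/-- The filter of agreement between `n`-tuples for the theory of divisible ordered groups with a
constant `1`: to finite precision, finitely many integral affine forms have the same signs. -/
def orderFilter (n : ℕ) : Filter ((Fin n → M) × (Fin n → N)) :=
  ⨅ a : AffineForm n, 𝓟 {p | cmp (eval p.1 a) 0 = cmp (eval p.2 a) 0}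

variable {M N} {n : ℕ}

theorem eventually_cmp_eval_zero_eq (a : AffineForm n) :
    ∀ᶠ p in orderFilter M N n, cmp (eval p.1 a) 0 = cmp (eval p.2 a) 0 :=
  mem_iInf_of_mem a (mem_principal_self _)

variable (M N) in
theorem tendsto_swap_orderFilter (n : ℕ) :
    Tendsto Prod.swap (orderFilter M N n) (orderFilter N M n) :=
  tendsto_iInf.2 fun a => tendsto_principal.2 <|
    (eventually_cmp_eval_zero_eq a).mono fun _ => Eq.symm

variable [IsOrderedAddMonoid M] [IsOrderedAddMonoid N]

theorem pure_le_orderFilter_zero [ZeroLEOneClass M] [NeZero (1 : M)] [ZeroLEOneClass N]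
    [NeZero (1 : N)] (p : (Fin 0 → M) × (Fin 0 → N)) : pure p ≤ orderFilter M N 0 := by
  refine le_iInf fun a => ?_
  rw [le_principal_iff, mem_pure, Set.mem_ofPred_eq, eval_apply, eval_apply, Finset.sum_of_isEmpty,
    Finset.sum_of_isEmpty, add_zero, add_zero, ← Int.cast_zero (R := M), ← Int.cast_zero (R := N),
    Int.cast_strictMono.cmp_map_eq, Int.cast_strictMono.cmp_map_eq]

theorem eventually_cmp_eval_eq (a b : AffineForm n) :
    ∀ᶠ p in orderFilter M N n, cmp (eval p.1 a) (eval p.1 b) = cmp (eval p.2 a) (eval p.2 b) := by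
  filter_upwards [eventually_cmp_eval_zero_eq (a - b)] with p hp
  rwa [map_sub, map_sub, cmp_sub_zero, cmp_sub_zero] at hp

theorem cmp_eval_snoc_zero_eq {l : ℕ} (hl : l ≠ 0) {a : AffineForm (n + 1)}
    (ha : a.2 (Fin.last n) ∣ l) {x : Fin n → M} {x' : Fin n → N} {y : M} {y' : N}
    (h : cmp (eval x (-((l / a.2 (Fin.last n)) • (a.1, Fin.init a.2)))) (l • y) =
      cmp (eval x' (-((l / a.2 (Fin.last n)) • (a.1, Fin.init a.2)))) (l • y')) :
    cmp (eval (Fin.snoc x y : Fin (n + 1) → M) a) 0 =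
      cmp (eval (Fin.snoc x' y' : Fin (n + 1) → N) a) 0 := by
  have hmul := Int.ediv_mul_cancel ha
  have hne : (l / a.2 (Fin.last n) : ℤ) ≠ 0 := left_ne_zero_of_mul (by rw [hmul]; exact_mod_cast hl)
  refine cmp_zero_eq_of_cmp_zsmul_zero_eq hne ?_
  rw [cmp_eq_cmp_symm, ← cmp_sub_zero, ← cmp_sub_zero (l • y')] at h
  simpa only [eval_snoc, smul_add, smul_smul, hmul, natCast_zsmul, map_neg, map_smul,
    sub_neg_eq_add, add_comm] using h

theorem exists_finset_of_mem_orderFilter {s : Set ((Fin (n + 1) → M) × (Fin (n + 1) → N))}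
    (hs : s ∈ orderFilter M N (n + 1)) :
    ∃ l : ℕ, l ≠ 0 ∧ ∃ T : Finset (AffineForm n), ∀ᶠ p in orderFilter M N n, ∀ y y',
      (∀ a ∈ T, cmp (eval p.1 a) (l • y) = cmp (eval p.2 a) (l • y')) →
        (Fin.snoc p.1 y, Fin.snoc p.2 y') ∈ s := by
  obtain ⟨A, hA, hAs⟩ := (hasBasis_iInf_principal_finite _).mem_iff.1 hs
  lift A to Finset (AffineForm (n + 1)) using hA
  let l : ℕ := ∏ a ∈ A with a.2 (Fin.last n) ≠ 0, (a.2 (Fin.last n)).natAbs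
  have hl : l ≠ 0 := Finset.prod_ne_zero_iff.2 fun a ha =>
    Int.natAbs_ne_zero.2 (Finset.mem_filter.1 ha).2
  refine ⟨l, hl, A.image fun a => -((l / a.2 (Fin.last n) : ℤ) • (a.1, Fin.init a.2)), ?_⟩
  filter_upwards [(Finset.eventually_all A).2 fun a _ =>
    eventually_cmp_eval_zero_eq (a.1, Fin.init a.2)] with p hp y y' hyy'
  refine hAs (Set.mem_iInter₂.2 fun a ha => ?_)
  rcases eq_or_ne (a.2 (Fin.last n)) 0 with hcoeff | hcoeff
  · rw [Set.mem_ofPred_eq, eval_snoc, eval_snoc, hcoeff, zero_smul, zero_smul, add_zero, add_zero]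
    exact hp a ha
  · have hdvd : a.2 (Fin.last n) ∣ l := Int.natAbs_dvd.1 <| Int.natCast_dvd_natCast.2 <|
      Finset.dvd_prod_of_mem _ (Finset.mem_filter.2 ⟨ha, hcoeff⟩)
    exact cmp_eval_snoc_zero_eq hl hdvd (hyy' _ (Finset.mem_image_of_mem _ ha))

theorem orderFilter_forth [DivisibleBy N ℕ] [Nontrivial N]
    {s : Set ((Fin (n + 1) → M) × (Fin (n + 1) → N))} (hs : s ∈ orderFilter M N (n + 1)) :
    ∀ᶠ p in orderFilter M N n, ∀ y, ∃ y', (Fin.snoc p.1 y, Fin.snoc p.2 y') ∈ s := by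
  have := denselyOrdered_of_divisibleBy (M := N)
  obtain ⟨l, hl, T, hT⟩ := exists_finset_of_mem_orderFilter hs
  filter_upwards [hT, (Finset.eventually_all T).2 fun a _ =>
    (Finset.eventually_all T).2 fun b _ => eventually_cmp_eval_eq a b] with p extend agree y
  obtain ⟨y', hy'⟩ := exists_forall_cmp_eq T (eval p.1) (eval p.2) agree (l • y)
  refine ⟨DivisibleBy.div y' l, extend _ _ fun a ha => ?_⟩
  rw [DivisibleBy.div_cancel _ hl, hy' a ha]

theorem orderFilter_forth_Ico [DivisibleBy N ℕ] [Nontrivial N]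
    {s : Set ((Fin (n + 1) → M) × (Fin (n + 1) → N))} (hs : s ∈ orderFilter M N (n + 1)) :
    ∀ᶠ p in orderFilter M N n, ∀ y, 0 ≤ y → y < 1 →
      ∃ y', 0 ≤ y' ∧ y' < 1 ∧ (Fin.snoc p.1 y, Fin.snoc p.2 y') ∈ s := by
  let last : AffineForm (n + 1) := (0, Pi.single (Fin.last n) 1)
  filter_upwards [orderFilter_forth ((eventually_cmp_eval_zero_eq last).and
    ((eventually_cmp_eval_eq last (1, 0)).and hs))] with p hp y hy₀ hy₁
  obtain ⟨y', hcmp₀, hcmp₁, hmem⟩ := hp y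
  simp only [last, eval_single, eval_intCast, Fin.snoc_last, Int.cast_one] at hcmp₀ hcmp₁
  exact ⟨y', (le_iff_le_of_cmp_eq_cmp (cmp_eq_cmp_symm.1 hcmp₀)).1 hy₀,
    (lt_iff_lt_of_cmp_eq_cmp hcmp₁).1 hy₁, hmem⟩

end OrderFilter

section PresburgerFilter

open AffineForm IntegerPart

variable (M N : Type*) [AddCommGroupWithOne M] [LinearOrder M] [IntegerPart M]
  [AddCommGroupWithOne N] [LinearOrder N] [IntegerPart N]

/-- The filter of agreement between `n`-tuples of integers for Presburger arithmetic: to finite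
precision, finitely many integral affine forms have the same signs and the entries have the same
standard residues modulo a positive standard integer. -/
def presburgerFilter (n : ℕ) : Filter ((Fin n → M) × (Fin n → N)) :=
  orderFilter M N n ⊓ ⨅ m : ℕ+, 𝓟 {p | ∀ i, (p.1 i, p.2 i) ∈ congruenceGraph M N m}

variable {M N} {n : ℕ}

theorem eventually_mem_congruenceGraph (n : ℕ) {m : ℕ} (hm : m ≠ 0) :
    ∀ᶠ p in presburgerFilter M N n, ∀ i, (p.1 i, p.2 i) ∈ congruenceGraph M N m :=
  mem_inf_of_right (mem_iInf_of_mem (⟨m, hm.bot_lt⟩ : ℕ+) (mem_principal_self _))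

variable (M N) in
theorem tendsto_swap_presburgerFilter (n : ℕ) :
    Tendsto Prod.swap (presburgerFilter M N n) (presburgerFilter N M n) := by
  refine tendsto_inf.2 ⟨(tendsto_swap_orderFilter M N n).mono_left inf_le_left,
    tendsto_iInf.2 fun m => tendsto_principal.2 ?_⟩
  filter_upwards [eventually_mem_congruenceGraph n m.ne_zero] with p hp i
  obtain ⟨c, z, hz, z', hz', h, h'⟩ := mem_congruenceGraph.1 (hp i)
  exact mem_congruenceGraph.2 ⟨c, z', hz', z, hz, h', h⟩

theorem exists_of_mem_presburgerFilter {s : Set ((Fin n → M) × (Fin n → N))}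
    (hs : s ∈ presburgerFilter M N n) : ∃ t ∈ orderFilter M N n, ∃ m : ℕ, m ≠ 0 ∧
      ∀ p ∈ t, (∀ i, (p.1 i, p.2 i) ∈ congruenceGraph M N m) → p ∈ s := by
  obtain ⟨t, ht, u, hu, rfl⟩ := mem_inf_iff.1 hs
  have hdir : Directed (· ≥ ·) fun m : ℕ+ =>
      𝓟 {p : (Fin n → M) × (Fin n → N) | ∀ i, (p.1 i, p.2 i) ∈ congruenceGraph M N m} :=
    fun m₁ m₂ => ⟨m₁ * m₂,
      principal_mono.2 fun _ hp i => congruenceGraph_anti (Dvd.intro _ rfl) (hp i),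
      principal_mono.2 fun _ hp i => congruenceGraph_anti (Dvd.intro_left _ rfl) (hp i)⟩
  obtain ⟨m, hm⟩ := (mem_iInf_of_directed hdir u).1 hu
  exact ⟨t, ht, m, m.ne_zero, fun p hpt hpm => ⟨hpt, hm hpm⟩⟩

variable [IsOrderedAddMonoid M] [IsOrderedAddMonoid N]

theorem pure_le_presburgerFilter_zero (p : (Fin 0 → M) × (Fin 0 → N)) :
    pure p ≤ presburgerFilter M N 0 :=
  le_inf (pure_le_orderFilter_zero p) <| le_iInf fun _ => le_principal_iff.2 fun i => i.elim0

theorem presburgerFilter_forth [DivisibleBy M ℕ]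
    {s : Set ((Fin (n + 1) → M) × (Fin (n + 1) → N))} (hs : s ∈ presburgerFilter M N (n + 1)) :
    ∀ᶠ p in presburgerFilter M N n, ∀ y ∈ integers M, ∃ y' ∈ integers N,
      (Fin.snoc p.1 y, Fin.snoc p.2 y') ∈ s := by
  obtain ⟨t, ht, m, hm, hts⟩ := exists_of_mem_presburgerFilter hs
  obtain ⟨l, hl, T, hT⟩ := exists_finset_of_mem_orderFilter ht
  have hlm : l * m ≠ 0 := mul_ne_zero hl hm
  have agree := (Finset.eventually_all (insert 0 T)).2 fun b _ =>
    (Finset.eventually_all (insert 0 T)).2 fun a _ =>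
      (Finset.eventually_all (Finset.Icc (-(l * m : ℕ) : ℤ) (l * m : ℕ))).2 fun d _ =>
        eventually_cmp_eval_eq (M := M) (N := N) b (a + (d, 0))
  filter_upwards [mem_inf_of_left hT, mem_inf_of_left agree,
    eventually_mem_congruenceGraph n hlm] with p extend agree congruent y hy
  obtain ⟨a, ha, d, hd, ⟨z, hz, hyz⟩, hcmp⟩ := exists_forall_cmp_add_intCast_eq
    (Finset.insert_nonempty 0 T) (f := eval p.1) (y := l • y)
    (fun a _ => eval_mem one_mem (fun i => (mem_integers_of_mem_congruenceGraph (congruent i)).1) a)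
    (nsmul_mem hy l) hlm
  have hgraph : (l • y, eval p.2 a + d) ∈ congruenceGraph M N (l * m) := by
    have hsum : (l • y, eval p.2 a + d) =
        (eval p.1 a, eval p.2 a) + d • 1 + ((l * m) • z, 0) := by ext <;> simp [hyz]
    rw [hsum]
    refine add_mem (add_mem (prodMk_eval_mem one_mem_congruenceGraph congruent a)
      (zsmul_mem one_mem_congruenceGraph d)) ?_
    exact mem_congruenceGraph.2 ⟨0, z, hz, 0, zero_mem _, by simp, by simp⟩
  obtain ⟨y', hy', hyy'⟩ := exists_mem_congruenceGraph_of_nsmul hl hy hgraph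
  refine ⟨y', (mem_integers_of_mem_congruenceGraph hyy').2, hts _ (extend y y' fun b hb => ?_) ?_⟩
  · have hb' : b ∈ insert 0 T := Finset.mem_insert_of_mem hb
    rw [hy', ← hcmp b hb']
    simpa only [map_add, eval_intCast] using agree b hb' a ha d hd
  · refine Fin.lastCases ?_ fun i => ?_
    · simpa only [Fin.snoc_last] using hyy'
    · simpa only [Fin.snoc_castSucc] using congruenceGraph_anti (Dvd.intro_left l rfl) (congruent i)

end PresburgerFilter

section FloorFractFilter

open AffineForm IntegerPart

variable {M N : Type*} [AddCommGroupWithOne M] [LinearOrder M] [IntegerPart M]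
  [AddCommGroupWithOne N] [LinearOrder N] [IntegerPart N]

variable {n : ℕ}

theorem eval_eq_eval_floor_add_eval_fract (x : Fin n → M) (a : AffineForm n) :
    eval x a = eval (floor ∘ x) a + eval (fract ∘ x) (0, a.2) := by
  rw [← eval_add_left]
  congr 2
  exact funext fun i => (floor_add_fract (x i)).symm

variable (M N) in
/-- The filter of agreement between `n`-tuples of groups with an integer part: the floors agree for
Presburger arithmetic and the fractional parts agree for divisible ordered groups. -/
noncomputable def floorFractFilter (n : ℕ) : Filter ((Fin n → M) × (Fin n → N)) :=
  (presburgerFilter M N n).comap (Prod.map (floor ∘ ·) (floor ∘ ·)) ⊓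
    (orderFilter M N n).comap (Prod.map (fract ∘ ·) (fract ∘ ·))

variable (M N) in
theorem tendsto_floor_floorFractFilter (n : ℕ) :
    Tendsto (Prod.map (floor ∘ ·) (floor ∘ ·)) (floorFractFilter M N n) (presburgerFilter M N n) :=
  tendsto_comap.mono_left inf_le_left

variable (M N) in
theorem tendsto_fract_floorFractFilter (n : ℕ) :
    Tendsto (Prod.map (fract ∘ ·) (fract ∘ ·)) (floorFractFilter M N n) (orderFilter M N n) :=
  tendsto_comap.mono_left inf_le_right

variable (M N) in
theorem tendsto_swap_floorFractFilter (n : ℕ) :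
    Tendsto Prod.swap (floorFractFilter M N n) (floorFractFilter N M n) :=
  tendsto_inf.2
    ⟨tendsto_comap_iff.2 <|
      (tendsto_swap_presburgerFilter M N n).comp (tendsto_floor_floorFractFilter M N n),
    tendsto_comap_iff.2 <|
      (tendsto_swap_orderFilter M N n).comp (tendsto_fract_floorFractFilter M N n)⟩

variable [IsOrderedAddMonoid M] [IsOrderedAddMonoid N]

variable (M N) in
theorem neBot_floorFractFilter_zero : (floorFractFilter M N 0).NeBot := by
  refine .mono (f := pure default) inferInstance (le_inf ?_ ?_)
  · rw [← map_le_iff_le_comap, map_pure]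
    exact pure_le_presburgerFilter_zero _
  · rw [← map_le_iff_le_comap, map_pure]
    exact pure_le_orderFilter_zero _

theorem exists_intCast_le_eval_fract_lt (x : Fin n → M) (a : Fin n → ℤ) :
    ∃ k ∈ Finset.Ico (-∑ i, |a i|) (∑ i, |a i| + 1),
      (k : M) ≤ eval (fract ∘ x) (0, a) ∧ eval (fract ∘ x) (0, a) < k + 1 := by
  have hfract (i : Fin n) : |(fract ∘ x) i| ≤ 1 :=
    (abs_of_nonneg (fract_nonneg (x i))).trans_le (fract_lt_one (x i)).le
  obtain ⟨lower, upper⟩ := abs_le.1 (abs_eval_zero_le hfract a)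
  refine exists_intCast_le_lt (by rwa [Int.cast_neg]) (upper.trans_lt ?_)
  exact Int.cast_lt.2 (lt_add_one _)

theorem eventually_cmp_eval_zero_eq_and_mem_iff (a : AffineForm n) :
    ∀ᶠ p in floorFractFilter M N n, cmp (eval p.1 a) 0 = cmp (eval p.2 a) 0 ∧
      (eval p.1 a ∈ integers M ↔ eval p.2 a ∈ integers N) := by
  let range := Finset.Ico (-∑ i, |a.2 i|) (∑ i, |a.2 i| + 1)
  have floors := (tendsto_floor_floorFractFilter M N n).eventually <| mem_inf_of_left <|
    (Finset.eventually_all range).2 fun k _ => eventually_cmp_eval_zero_eq (a + (k, 0))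
  have fracts := (tendsto_fract_floorFractFilter M N n).eventually <|
    (Finset.eventually_all range).2 fun k _ =>
      (eventually_cmp_eval_eq (0, a.2) (k, 0)).and (eventually_cmp_eval_eq (0, a.2) (k + 1, 0))
  filter_upwards [floors, fracts] with p hfloor hfract
  obtain ⟨k, hk, le_S, S_lt⟩ := exists_intCast_le_eval_fract_lt p.1 a.2
  specialize hfloor k hk
  obtain ⟨hfract, hfract'⟩ := hfract k hk
  simp only [Prod.map, map_add, eval_intCast, Int.cast_add, Int.cast_one] at hfloor hfract hfract'
  have le_S' := (le_iff_le_of_cmp_eq_cmp (cmp_eq_cmp_symm.1 hfract)).1 le_S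
  have S_lt' := (lt_iff_lt_of_cmp_eq_cmp hfract').1 S_lt
  have hW : eval (floor ∘ p.1) a ∈ integers M := eval_mem one_mem (fun i => floor_mem _) a
  have hW' : eval (floor ∘ p.2) a ∈ integers N := eval_mem one_mem (fun i => floor_mem _) a
  rw [eval_eq_eval_floor_add_eval_fract p.1, eval_eq_eval_floor_add_eval_fract p.2,
    cmp_add_zero_of_intCast_le_lt hW le_S S_lt, cmp_add_zero_of_intCast_le_lt hW' le_S' S_lt',
    add_mem_iff_of_intCast_le_lt hW le_S S_lt, add_mem_iff_of_intCast_le_lt hW' le_S' S_lt',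
    hfloor, hfract]
  exact ⟨rfl, eq_iff_eq_of_cmp_eq_cmp hfract⟩

theorem floorFractFilter_forth [DivisibleBy M ℕ] [DivisibleBy N ℕ]
    {s : Set ((Fin (n + 1) → M) × (Fin (n + 1) → N))} (hs : s ∈ floorFractFilter M N (n + 1)) :
    ∀ᶠ p in floorFractFilter M N n, ∀ x, ∃ x', (Fin.snoc p.1 x, Fin.snoc p.2 x') ∈ s := by
  obtain ⟨_, ⟨t, ht, hts⟩, _, ⟨u, hu, hus⟩, rfl⟩ := mem_inf_iff.1 hs
  filter_upwards [(tendsto_floor_floorFractFilter M N n).eventually (presburgerFilter_forth ht),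
    (tendsto_fract_floorFractFilter M N n).eventually (orderFilter_forth_Ico hu)]
    with p hfloor hfract x
  obtain ⟨w, hw, hwt⟩ := hfloor (floor x) (floor_mem x)
  obtain ⟨r, hr₀, hr₁, hru⟩ := hfract (fract x) (fract_nonneg x) (fract_lt_one x)
  refine ⟨w + r, hts ?_, hus ?_⟩
  · simpa only [Set.mem_preimage, Prod.map, Fin.comp_snoc, floor_add_of_mem hw hr₀ hr₁] using hwt
  · simpa only [Set.mem_preimage, Prod.map, Fin.comp_snoc, fract_add_of_mem hw hr₀ hr₁] using hru

theorem floorFractFilter_back [DivisibleBy M ℕ] [DivisibleBy N ℕ]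
    {s : Set ((Fin (n + 1) → M) × (Fin (n + 1) → N))} (hs : s ∈ floorFractFilter M N (n + 1)) :
    ∀ᶠ p in floorFractFilter M N n, ∀ x', ∃ x, (Fin.snoc p.1 x, Fin.snoc p.2 x') ∈ s :=
  (tendsto_swap_floorFractFilter M N n).eventually
    (floorFractFilter_forth (tendsto_swap_floorFractFilter N M (n + 1) hs))

end FloorFractFilter

namespace L2G

open AffineForm IntegerPart

/-- The operations and relations of the `L2G`-structure on `M` are those of the ordered abelian
group `M` with its distinguished integer part. -/
class IsCompatible (M : Type*) [L2G.Structure M] [AddCommGroupWithOne M] [LinearOrder M]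
    [IntegerPart M] : Prop where
  add_eq (x y : M) : L2G.add x y = x + y
  zero_eq : L2G.zero M = 0
  one_eq : L2G.one M = 1
  lt_iff (x y : M) : L2G.lt x y ↔ x < y
  inZ_iff (x : M) : L2G.inZ x ↔ x ∈ integers M

open IsCompatible

/-- The affine form computed by an `L2G`-term. -/
def termForm {n : ℕ} : L2G.Term (Empty ⊕ Fin n) → AffineForm n
  | .var (.inr i) => (0, Pi.single i 1)
  | .func (l := 0) f _ => (Fin.val (show Fin 2 from f), 0)
  | .func (l := 2) _ ts => termForm (ts 0) + termForm (ts 1)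

section Compatible

variable {M : Type*} [L2G.Structure M] [AddCommGroupWithOne M] [LinearOrder M] [IntegerPart M]
  [IsCompatible M] {n : ℕ}

theorem realize_eq_eval_termForm (x : Fin n → M) :
    ∀ t : L2G.Term (Empty ⊕ Fin n), t.realize (Sum.elim default x) = eval x (termForm t)
  | .var (.inr i) => (eval_single x i).symm
  | .func (l := 0) f ts => by
    rw [Language.Term.realize_func, Subsingleton.elim (fun i => _) ![], termForm, eval_intCast]
    match f with
    | (0 : Fin 2) => exact zero_eq.trans Int.cast_zero.symm
    | (1 : Fin 2) => exact one_eq.trans Int.cast_one.symm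
  | .func (l := 2) f ts => by
    rw [Language.Term.realize_func, ← FinVec.etaExpand_eq (fun i => _), termForm, map_add,
      ← realize_eq_eval_termForm x (ts 0), ← realize_eq_eval_termForm x (ts 1)]
    exact add_eq _ _

theorem realize_zSym_iff (x : Fin n → M) (ts : Fin 1 → L2G.Term (Empty ⊕ Fin n)) :
    (zSym.boundedFormula ts).Realize default x ↔ eval x (termForm (ts 0)) ∈ integers M := by
  rw [Language.BoundedFormula.realize_rel, ← FinVec.etaExpand_eq (fun i => _),
    ← realize_eq_eval_termForm]
  exact inZ_iff _

theorem realize_ltSym_iff (x : Fin n → M) (ts : Fin 2 → L2G.Term (Empty ⊕ Fin n)) :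
    (ltSym.boundedFormula ts).Realize default x ↔
      eval x (termForm (ts 0)) < eval x (termForm (ts 1)) := by
  rw [Language.BoundedFormula.realize_rel, ← FinVec.etaExpand_eq (fun i => _),
    ← realize_eq_eval_termForm, ← realize_eq_eval_termForm]
  exact lt_iff _ _

end Compatible

section BackAndForth

variable {M N : Type*} [L2G.Structure M] [AddCommGroupWithOne M] [LinearOrder M]
  [IsOrderedAddMonoid M] [IntegerPart M] [IsCompatible M] [L2G.Structure N] [AddCommGroupWithOne N]
  [LinearOrder N] [IsOrderedAddMonoid N] [IntegerPart N] [IsCompatible N] {n : ℕ}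

theorem eventually_realize_iff_of_isAtomic {φ : L2G.BoundedFormula Empty n} (hφ : φ.IsAtomic) :
    ∀ᶠ p in floorFractFilter M N n, φ.Realize default p.1 ↔ φ.Realize default p.2 := by
  have cmp_termForm (t₁ t₂ : L2G.Term (Empty ⊕ Fin n)) := (eventually_cmp_eval_zero_eq_and_mem_iff
    (M := M) (N := N) (termForm t₁ - termForm t₂)).mono fun p hp => hp.1
  simp only [map_sub, cmp_sub_zero] at cmp_termForm
  cases hφ with
  | equal t₁ t₂ =>
    filter_upwards [cmp_termForm t₁ t₂] with p hp
    simp only [Language.BoundedFormula.realize_bdEqual, realize_eq_eval_termForm]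
    exact eq_iff_eq_of_cmp_eq_cmp hp
  | @rel l R ts =>
    match l, R with
    | 1, _ =>
      filter_upwards [eventually_cmp_eval_zero_eq_and_mem_iff (termForm (ts 0))] with p hp
      exact (realize_zSym_iff p.1 ts).trans (hp.2.trans (realize_zSym_iff p.2 ts).symm)
    | 2, _ =>
      filter_upwards [cmp_termForm (ts 0) (ts 1)] with p hp
      exact (realize_ltSym_iff p.1 ts).trans
        ((lt_iff_lt_of_cmp_eq_cmp hp).trans (realize_ltSym_iff p.2 ts).symm)

variable (M N) in
theorem backAndForth_floorFractFilter [DivisibleBy M ℕ] [DivisibleBy N ℕ] :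
    BackAndForth L2G (floorFractFilter M N) where
  neBot := neBot_floorFractFilter_zero M N
  atomic := eventually_realize_iff_of_isAtomic
  forth := floorFractFilter_forth
  back := floorFractFilter_back

end BackAndForth

section Axioms

variable {M : Type*} [L2G.Structure M]

theorem exists_addCommGroupWithOne (assoc : ∀ x y z : M, add (add x y) z = add x (add y z))
    (comm : ∀ x y : M, add x y = add y x) (add_zero : ∀ x : M, add x (zero M) = x)
    (exists_neg : ∀ x : M, ∃ y : M, add x y = zero M) :
    ∃ _ : AddCommGroupWithOne M, (∀ x y : M, add x y = x + y) ∧ zero M = 0 ∧ one M = 1 := by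
  choose neg add_neg using exists_neg
  let _ : Add M := ⟨add⟩
  let _ : Zero M := ⟨zero M⟩
  let _ : One M := ⟨one M⟩
  let _ : Neg M := ⟨neg⟩
  exact ⟨{
    add_assoc := assoc
    zero_add := fun x => (comm _ _).trans (add_zero x)
    add_zero := add_zero
    neg_add_cancel := fun x => (comm _ _).trans (add_neg x)
    add_comm := comm
    nsmul := nsmulRec
    zsmul := zsmulRec }, fun _ _ => rfl, rfl, rfl⟩

theorem exists_linearOrder (irrefl : ∀ x : M, ¬ lt x x)
    (trans : ∀ x y z : M, lt x y → lt y z → lt x z)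
    (trichotomous : ∀ x y : M, lt x y ∨ x = y ∨ lt y x) :
    ∃ _ : LinearOrder M, ∀ x y : M, lt x y ↔ x < y := by
  classical
  have : IsStrictTotalOrder M lt :=
    { irrefl, trans,
      trichotomous := fun x y hxy hyx => ((trichotomous x y).resolve_left hxy).resolve_right hyx }
  exact ⟨linearOrderOfSTO lt, fun _ _ => Iff.rfl⟩

theorem nsmul_eq [AddMonoid M] (add_eq : ∀ x y : M, add x y = x + y)
    (zero_eq : zero M = 0) (n : ℕ) (x : M) : nsmul n x = n • x := by
  induction n with
  | zero => rw [nsmul, zero_eq, zero_nsmul]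
  | succ n ih => rw [nsmul, add_eq, ih, succ_nsmul']

theorem IsGGStructure.exists_isCompatible (hM : IsGGStructure M) :
    ∃ (_ : AddCommGroupWithOne M) (_ : LinearOrder M) (_ : IsOrderedAddMonoid M)
      (_ : DivisibleBy M ℕ) (_ : IntegerPart M), IsCompatible M := by
  obtain ⟨assoc, comm, add_zero, exists_neg, irrefl, trans, trichotomous, add_lt_add, divisible,
    zero_mem, add_mem, neg_mem, one_mem, zero_lt_one, one_least, exists_floor⟩ := hM
  obtain ⟨_, add_eq, zero_eq, one_eq⟩ := exists_addCommGroupWithOne assoc comm add_zero exists_neg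
  obtain ⟨_, lt_iff⟩ := exists_linearOrder irrefl trans trichotomous
  simp only [nsmul_eq add_eq zero_eq] at divisible
  simp only [add_eq, zero_eq, one_eq, lt_iff] at add_lt_add zero_mem add_mem neg_mem one_mem
  simp only [add_eq, zero_eq, one_eq, lt_iff, not_lt] at zero_lt_one one_least exists_floor
  have : IsOrderedAddMonoid M := {
    add_le_add_left := fun x y hxy z => by
      have hmono : StrictMono fun x => x + z := fun x y hxy => add_lt_add x y z hxy
      exact hmono.monotone hxy }
  let _ : IntegerPart M := {
    integers := {
      carrier := {x | inZ x}
      add_mem' := fun {x y} => add_mem x y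
      zero_mem' := zero_mem
      neg_mem' := fun {x} hx => neg_mem x (-x) hx (add_neg_cancel x) }
    one_mem := one_mem
    one_pos := zero_lt_one
    one_le_of_pos := fun hx => one_least _ hx
    exists_mem_le_lt_add_one := exists_floor }
  have div : DivisibleBy M ℕ :=
    divisibleByOfSMulRightSurj M ℕ fun hn x => divisible x _ (Nat.pos_of_ne_zero hn)
  exact ⟨_, _, this, div, _, add_eq, zero_eq, one_eq, lt_iff, fun _ => Iff.rfl⟩

end Axioms

end L2G

theorem stmt_13 (M N : Type*) [L2G.Structure M] [L2G.Structure N]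
    (hM : L2G.IsGGStructure M) (hN : L2G.IsGGStructure N) :
    L2G.ElementarilyEquivalent M N := by
  obtain ⟨_, _, _, _, _, _⟩ := hM.exists_isCompatible
  obtain ⟨_, _, _, _, _, _⟩ := hN.exists_isCompatible
  exact (L2G.backAndForth_floorFractFilter M N).elementarilyEquivalent
end

section
/- Let L_3G be the first-order language with a binary function symbol +, constant symbols 0 and 1, a binary relation symbol <, and unary relation symbols Z and L. Call an L_3G-structure a model of GGG if: its universe with +, 0, < is a divisible ordered abelian group; the set defined by Z is an integer part whose least positive element equals the interpretation of 1; and the set defined by L is a convex subgroup containing the interpretation of 1. Let M and N be models of GGG such that L defines the whole universe in M if and only if L defines the whole universe in N. Then M and N are elementarily equivalent. In other words, the only completions of the theory GGG are GGG + (Q = L) and GGG + (Q ≠ L). -/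
open FirstOrder

/-- The language `L_3G` with constants `0`, `1`, a binary function `+`, unary relations `Z`
and `L`, and a binary relation `<`. -/
def L3G : FirstOrder.Language where
  Functions n := match n with
    | 0 => Fin 2
    | 2 => Unit
    | _ => Empty
  Relations n := match n with
    | 1 => Fin 2
    | 2 => Unit
    | _ => Empty

namespace L3G

def zeroSym : L3G.Functions 0 := (0 : Fin 2)
def oneSym : L3G.Functions 0 := (1 : Fin 2)
def addSym : L3G.Functions 2 := Unit.unit
def zSym : L3G.Relations 1 := (0 : Fin 2)
def lSym : L3G.Relations 1 := (1 : Fin 2)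
def ltSym : L3G.Relations 2 := Unit.unit

variable {M : Type*} [L3G.Structure M]

/-- The interpretation of `+` in an `L3G`-structure. -/
def add (x y : M) : M := Language.Structure.funMap addSym ![x, y]

/-- The interpretation of `0` in an `L3G`-structure. -/
def zero (M : Type*) [L3G.Structure M] : M := Language.Structure.funMap zeroSym ![]

/-- The interpretation of `1` in an `L3G`-structure. -/
def one (M : Type*) [L3G.Structure M] : M := Language.Structure.funMap oneSym ![]

/-- The interpretation of `<` in an `L3G`-structure. -/
def lt (x y : M) : Prop := Language.Structure.RelMap ltSym ![x, y]

/-- The interpretation of `Z` in an `L3G`-structure. -/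
def inZ (x : M) : Prop := Language.Structure.RelMap zSym ![x]

/-- The interpretation of `L` in an `L3G`-structure. -/
def inL (x : M) : Prop := Language.Structure.RelMap lSym ![x]

/-- `n`-fold sum `x + ⋯ + x` in an `L3G`-structure. -/
def nsmul : ℕ → M → M
  | 0, _ => zero M
  | n + 1, x => add x (nsmul n x)

/-- An `L3G`-structure is a model of `GGG` if its universe with `+`, `0`, `<` is a divisible
ordered abelian group, `Z` defines an integer part whose least positive element is `1`, and
`L` defines a convex subgroup containing `1`. -/
def IsGGGStructure (M : Type*) [L3G.Structure M] : Prop :=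
  -- abelian group
  (∀ x y z : M, add (add x y) z = add x (add y z)) ∧
  (∀ x y : M, add x y = add y x) ∧
  (∀ x : M, add x (zero M) = x) ∧
  (∀ x : M, ∃ y : M, add x y = zero M) ∧
  -- linear order
  (∀ x : M, ¬ lt x x) ∧
  (∀ x y z : M, lt x y → lt y z → lt x z) ∧
  (∀ x y : M, lt x y ∨ x = y ∨ lt y x) ∧
  -- compatibility of the order with addition
  (∀ x y z : M, lt x y → lt (add x z) (add y z)) ∧
  -- divisibility
  (∀ (x : M) (n : ℕ), 0 < n → ∃ y : M, nsmul n y = x) ∧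
  -- Z defines a subgroup
  inZ (zero M) ∧
  (∀ x y : M, inZ x → inZ y → inZ (add x y)) ∧
  (∀ x y : M, inZ x → add x y = zero M → inZ y) ∧
  -- 1 is the least positive element of Z
  inZ (one M) ∧ lt (zero M) (one M) ∧
  (∀ x : M, inZ x → lt (zero M) x → ¬ lt x (one M)) ∧
  -- Z is an integer part
  (∀ x : M, ∃ n : M, inZ n ∧ ¬ lt x n ∧ lt x (add n (one M))) ∧
  -- L defines a subgroup
  inL (zero M) ∧
  (∀ x y : M, inL x → inL y → inL (add x y)) ∧
  (∀ x y : M, inL x → add x y = zero M → inL y) ∧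
  -- L is convex
  (∀ x y z : M, inL x → inL y → ¬ lt z x → ¬ lt y z → inL z) ∧
  -- 1 ∈ L
  inL (one M)

end L3G

/-!
In a model of `GGG`, `x ↦ (⌊x⌋, {x})` identifies the universe with `Z × [0, 1)`. The values of an
integral affine form at `{x}` are bounded by a standard integer, so its sign and its membership in
`Z` and in `L` at `x` depend only on finitely many conditions on `⌊x⌋` and on `{x}` separately.
Hence the Ehrenfeucht–Fraïssé game on two models can be played independently on the integer parts
and on the fractional parts, where a position records the behaviour of finitely many rational
affine forms.

To answer a move one fills the cut which the new element makes among the roots of the given forms,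
at the same side of `L`; this needs an element outside `L` in one model only if there is one in
the other. An integral move must also fall into the right residue class modulo a common denominator
`m`. If it lies within `m` of a root then it is itself one of finitely many affine forms in the old
entries, and otherwise the answer can be shifted by less than `m` without crossing a root.
-/

namespace GGG

open SignType

section BackAndForth

open Language

/-- A back-and-forth system of relations `R n i` between `n`-tuples of `M` and of `N`, graded by
indices `i : ι n` measuring their strength: extending a pair of tuples so that it satisfies a
prescribed relation is only possible for pairs that satisfy a suitably stronger one. This is the
Ehrenfeucht–Fraïssé game, with indices in place of the number of remaining moves. -/
structure GradedBackAndForth (L : Language) {M N : Type*} [L.Structure M] [L.Structure N]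
    {ι : ℕ → Type*} [∀ n, SemilatticeSup (ι n)]
    (R : ∀ n, ι n → (Fin n → M) → (Fin n → N) → Prop) : Prop where
  anti {n : ℕ} {i j : ι n} {x : Fin n → M} {y : Fin n → N} : i ≤ j → R n j x y → R n i x y
  atomic {n : ℕ} (φ : L.BoundedFormula Empty n) : φ.IsAtomic →
    ∃ i, ∀ x y, R n i x y → (φ.Realize default x ↔ φ.Realize default y)
  forth {n : ℕ} (i : ι (n + 1)) :
    ∃ j, ∀ x y, R n j x y → ∀ a : M, ∃ b : N, R (n + 1) i (Fin.snoc x a) (Fin.snoc y b)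
  back {n : ℕ} (i : ι (n + 1)) :
    ∃ j, ∀ x y, R n j x y → ∀ b : N, ∃ a : M, R (n + 1) i (Fin.snoc x a) (Fin.snoc y b)

namespace GradedBackAndForth

variable {L : Language} {M N : Type*} [L.Structure M] [L.Structure N]
  {ι : ℕ → Type*} [∀ n, SemilatticeSup (ι n)] [∀ n, Nonempty (ι n)]
  {R : ∀ n, ι n → (Fin n → M) → (Fin n → N) → Prop}

theorem exists_realize_iff (hR : GradedBackAndForth L R) {n : ℕ}
    (φ : L.BoundedFormula Empty n) :
    ∃ i, ∀ x y, R n i x y → (φ.Realize default x ↔ φ.Realize default y) := by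
  induction φ with
  | falsum => exact ⟨Classical.arbitrary _, fun _ _ _ => Iff.rfl⟩
  | equal t₁ t₂ => exact hR.atomic _ (.equal t₁ t₂)
  | rel r ts => exact hR.atomic _ (.rel r ts)
  | imp φ ψ ihφ ihψ =>
    obtain ⟨i, hi⟩ := ihφ
    obtain ⟨j, hj⟩ := ihψ
    refine ⟨i ⊔ j, fun x y hxy => ?_⟩
    rw [BoundedFormula.realize_imp, BoundedFormula.realize_imp,
      hi x y (hR.anti le_sup_left hxy), hj x y (hR.anti le_sup_right hxy)]
  | all φ ih =>
    obtain ⟨i, hi⟩ := ih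
    obtain ⟨j, hj⟩ := hR.forth i
    obtain ⟨k, hk⟩ := hR.back i
    refine ⟨j ⊔ k, fun x y hxy => ?_⟩
    rw [BoundedFormula.realize_all, BoundedFormula.realize_all]
    constructor
    · intro hall b
      obtain ⟨a, hab⟩ := hk x y (hR.anti le_sup_right hxy) b
      exact (hi _ _ hab).1 (hall a)
    · intro hall a
      obtain ⟨b, hab⟩ := hj x y (hR.anti le_sup_left hxy) a
      exact (hi _ _ hab).2 (hall b)

theorem elementarilyEquivalent (hR : GradedBackAndForth L R)
    (hnil : ∀ i, R 0 i default default) : L.ElementarilyEquivalent M N := by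
  refine elementarilyEquivalent_iff.2 fun φ => ?_
  obtain ⟨i, hi⟩ := hR.exists_realize_iff φ
  exact hi _ _ (hnil i)

end GradedBackAndForth

end BackAndForth

section OrderedVectorSpace

variable {Q : Type*} [AddCommGroup Q] [LinearOrder Q] [IsOrderedAddMonoid Q]

/-- The `ℚ`-vector space structure of a divisible ordered abelian group, transported from its
divisible hull. -/
noncomputable abbrev ratModule (hdiv : ∀ (x : Q) (n : ℕ), 0 < n → ∃ y : Q, n • y = x) :
    Module ℚ Q := by
  refine AddEquiv.module ℚ (AddEquiv.ofBijective (DivisibleHull.coeAddMonoidHom Q)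
    ⟨DivisibleHull.coe_injective, fun q => ?_⟩)
  induction q with | mk x n
  obtain ⟨y, hy⟩ := hdiv x n n.pos
  exact ⟨y, by simpa [DivisibleHull.mk_eq_mk_iff_smul_eq_smul] using hy⟩

theorem sign_sub_eq_of_lt_imp {P : Type*} [AddCommGroup P] [LinearOrder P]
    [IsOrderedAddMonoid P] {x u : P} {y v : Q} (hne : x ≠ u)
    (hlt : u < x → v < y) (hgt : x < u → y < v) : sign (x - u) = sign (y - v) := by
  rcases lt_or_gt_of_ne hne with h | h
  · rw [sign_neg (sub_neg.2 h), sign_neg (sub_neg.2 (hgt h))]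
  · rw [sign_pos (sub_pos.2 h), sign_pos (sub_pos.2 (hlt h))]

theorem sign_add_of_abs_lt {a b : Q} (h : |a| < |b|) : sign (a + b) = sign b := by
  rcases lt_trichotomy b 0 with hneg | rfl | hpos
  · rw [sign_neg hneg, sign_eq_neg_one_iff]
    grind [abs_lt, abs_of_neg]
  · exact absurd h (by simp)
  · rw [sign_pos hpos, sign_eq_one_iff]
    grind [abs_lt, abs_of_pos]

variable [Module ℚ Q]

instance : PosSMulStrictMono ℚ Q where
  smul_lt_smul_of_pos_left q hq a b hab := by
    have den_smul (x : Q) : q.den • q • x = q.num • x := by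
      rw [← Nat.cast_smul_eq_nsmul ℚ, smul_smul, Rat.den_mul_eq_num, Int.cast_smul_eq_zsmul]
    refine lt_of_nsmul_lt_nsmul_right q.den ?_
    simpa only [den_smul] using zsmul_lt_zsmul_right (Rat.num_pos.2 hq) hab

instance : DenselyOrdered Q where
  dense a b hab := by
    have hhalf := smul_pos (one_half_pos (α := ℚ)) (sub_pos.2 hab)
    have hsum : a + (1 / 2 : ℚ) • (b - a) + (1 / 2 : ℚ) • (b - a) = b := by module
    exact ⟨a + (1 / 2 : ℚ) • (b - a), lt_add_of_pos_right a hhalf,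
      (lt_add_of_pos_right _ hhalf).trans_eq hsum⟩

theorem sign_smul (q : ℚ) (a : Q) : sign (q • a) = sign q * sign a := by
  rcases lt_trichotomy q 0 with hq | rfl | hq <;> rcases lt_trichotomy a 0 with ha | rfl | ha <;>
    simp [sign_pos, sign_neg, smul_pos_of_neg_of_neg, smul_neg_of_neg_of_pos,
      smul_neg_of_pos_of_neg, *]

end OrderedVectorSpace

section ConvexSubspace

variable {M N : Type*}
  [AddCommGroup M] [LinearOrder M] [Module ℚ M] [AddCommGroup N] [LinearOrder N] [Module ℚ N]
  {K : Submodule ℚ M} {L : Submodule ℚ N}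

/-- `a` and `b` lie on the same side of `0`, and on the same side of the boundary of the convex
subspaces `K` and `L`. -/
structure SamePosition (K : Submodule ℚ M) (L : Submodule ℚ N) (a : M) (b : N) : Prop where
  sign_eq : sign a = sign b
  mem_iff : a ∈ K ↔ b ∈ L

namespace SamePosition

theorem symm {a : M} {b : N} (h : SamePosition K L a b) : SamePosition L K b a :=
  ⟨h.sign_eq.symm, h.mem_iff.symm⟩

theorem eq_zero_iff {a : M} {b : N} (h : SamePosition K L a b) : a = 0 ↔ b = 0 := by
  rw [← sign_eq_zero_iff, h.sign_eq, sign_eq_zero_iff]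

theorem pos_iff {a : M} {b : N} (h : SamePosition K L a b) : 0 < a ↔ 0 < b := by
  rw [← sign_eq_one_iff, h.sign_eq, sign_eq_one_iff]

theorem neg_iff {a : M} {b : N} (h : SamePosition K L a b) : a < 0 ↔ b < 0 := by
  rw [← sign_eq_neg_one_iff, h.sign_eq, sign_eq_neg_one_iff]

end SamePosition

theorem mem_of_nonneg_of_le (hK : (K : Set M).OrdConnected) {a b : M} (ha : 0 ≤ a) (hab : a ≤ b)
    (hb : b ∈ K) : a ∈ K :=
  hK.out K.zero_mem hb ⟨ha, hab⟩

variable [IsOrderedAddMonoid M] [IsOrderedAddMonoid N]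

theorem SamePosition.smul {a : M} {b : N} (h : SamePosition K L a b) (q : ℚ) :
    SamePosition K L (q • a) (q • b) := by
  refine ⟨by rw [sign_smul, sign_smul, h.sign_eq], ?_⟩
  rcases eq_or_ne q 0 with rfl | hq
  · simp
  · rw [K.smul_mem_iff hq, L.smul_mem_iff hq, h.mem_iff]

theorem sign_add_of_mem_of_notMem (hK : (K : Set M).OrdConnected) {a b : M} (ha : a ∈ K)
    (hb : b ∉ K) : sign (a + b) = sign b := by
  refine sign_add_of_abs_lt ?_
  by_contra! hle
  exact hb (abs_mem_iff.1 (mem_of_nonneg_of_le hK (abs_nonneg b) hle (abs_mem_iff.2 ha)))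

theorem exists_mem_between (hL : L ≠ ⊥) {lo hi : Finset N} (hlt : ∀ a ∈ lo, ∀ b ∈ hi, a < b) :
    ∃ y ∈ L, (∀ a ∈ lo, a ∈ L → a < y) ∧ ∀ b ∈ hi, b ∈ L → y < b := by
  classical
  have : Nontrivial L := Submodule.nontrivial_iff_ne_bot.2 hL
  obtain ⟨y, hlo, hhi⟩ := Order.exists_between_finsets
    (lo.subtype (· ∈ L)) (hi.subtype (· ∈ L)) fun a ha b hb =>
      hlt a (Finset.mem_subtype.1 ha) b (Finset.mem_subtype.1 hb)
  exact ⟨y, y.2, fun a ha haL => hlo ⟨a, haL⟩ (Finset.mem_subtype.2 ha),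
    fun b hb hbL => hhi ⟨b, hbL⟩ (Finset.mem_subtype.2 hb)⟩

theorem exists_pos_notMem (hL : L ≠ ⊤) : ∃ d, 0 < d ∧ d ∉ L := by
  obtain ⟨d, -, hd⟩ := SetLike.exists_of_lt hL.lt_top
  refine ⟨|d|, abs_pos.2 ?_, fun h => hd ?_⟩
  · rintro rfl
    exact hd L.zero_mem
  · exact abs_mem_iff.1 h

theorem exists_between_notMem (hconv : (L : Set N).OrdConnected) (hL : L ≠ ⊤) {lo hi : Finset N}
    (hlt : ∀ a ∈ lo, ∀ b ∈ hi, a < b) (hnotMem : ∀ a ∈ lo, ∀ b ∈ hi, b - a ∉ L) :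
    ∃ y, (∀ a ∈ lo, a < y ∧ y - a ∉ L) ∧ ∀ b ∈ hi, y < b ∧ y - b ∉ L := by
  classical
  obtain ⟨d, hdpos, hdL, hd⟩ : ∃ d, 0 < d ∧ d ∉ L ∧ ∀ a ∈ lo, ∀ b ∈ hi, d ≤ b - a := by
    obtain ⟨d₀, hd₀, hd₀L⟩ := exists_pos_notMem hL
    obtain ⟨d, hd, hmin⟩ := (insert d₀ (Finset.image₂ (fun a b => b - a) lo hi)).exists_min_image
      id (Finset.insert_nonempty _ _)
    refine ⟨d, ?_, ?_, fun a ha b hb =>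
      hmin _ (Finset.mem_insert_of_mem (Finset.mem_image₂_of_mem ha hb))⟩
    all_goals
      rcases Finset.mem_insert.1 hd with rfl | hd
      · assumption
      · obtain ⟨a, ha, b, hb, rfl⟩ := Finset.mem_image₂.1 hd
        first | exact sub_pos.2 (hlt a ha b hb) | exact hnotMem a ha b hb
  have : Nontrivial N := nontrivial_of_ne d 0 hdpos.ne'
  have hpos : 0 < (3⁻¹ : ℚ) • d := smul_pos (by norm_num) hdpos
  have hthird {x : N} (hx : (3⁻¹ : ℚ) • d < x) : x ∉ L := fun h =>
    hdL ((L.smul_mem_iff (by norm_num)).1 (mem_of_nonneg_of_le hconv hpos.le hx.le h))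
  obtain ⟨y, hlo, hhi⟩ := Order.exists_between_finsets (lo.image (· + (3⁻¹ : ℚ) • d))
    (hi.image (· - (3⁻¹ : ℚ) • d)) (by
      simp only [Finset.forall_mem_image]
      intro a ha b hb
      have h3 : d = (3⁻¹ : ℚ) • d + (3⁻¹ : ℚ) • d + (3⁻¹ : ℚ) • d := by module
      have := hd a ha b hb
      grind)
  simp only [Finset.forall_mem_image] at hlo hhi
  refine ⟨y, fun a ha => ⟨?_, hthird ?_⟩, fun b hb => ⟨?_, fun h => hthird ?_ (neg_mem h)⟩⟩
  · exact (lt_add_of_pos_right a hpos).trans (hlo ha)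
  · exact lt_sub_iff_add_lt'.2 (hlo ha)
  · exact (hhi hb).trans (sub_lt_self b hpos)
  · rw [neg_sub]
    exact lt_sub_comm.1 (hhi hb)

variable {ι : Type*} {J : Finset ι} {u : ι → M} {v : ι → N}

theorem exists_samePosition_sub_of_mem (hK : (K : Set M).OrdConnected)
    (hL : (L : Set N).OrdConnected) (hLbot : L ≠ ⊥)
    (huv : ∀ i ∈ J, ∀ j ∈ J, SamePosition K L (u i - u j) (v i - v j)) {x : M}
    (hx : ∀ i ∈ J, x ≠ u i) {j : ι} (hj : j ∈ J) (hxj : x - u j ∈ K) :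
    ∃ y, ∀ i ∈ J, SamePosition K L (x - u i) (y - v i) := by
  classical
  obtain ⟨y, hy, hlo, hhi⟩ := exists_mem_between hLbot
    (lo := {i ∈ J | u i < x}.image (v · - v j)) (hi := {i ∈ J | x < u i}.image (v · - v j)) (by
      simp only [Finset.forall_mem_image, Finset.mem_filter]
      rintro a ⟨ha, hax⟩ b ⟨hb, hxb⟩
      exact sub_lt_sub_right (sub_neg.1 ((huv a ha b hb).neg_iff.1 (sub_neg.2 (hax.trans hxb)))) _)
  simp only [Finset.forall_mem_image, Finset.mem_filter, and_imp] at hlo hhi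
  refine ⟨y + v j, fun i hi => ?_⟩
  have hxi : x - u i = (x - u j) + (u j - u i) := by abel
  have hyi : y + v j - v i = y + (v j - v i) := by abel
  have hji := huv j hj i hi
  by_cases hmem : u j - u i ∈ K
  · have hij : v i - v j ∈ L := sub_mem_comm_iff.1 (hji.mem_iff.1 hmem)
    refine ⟨sign_sub_eq_of_lt_imp (hx i hi) (fun h => ?_) (fun h => ?_), ?_⟩
    · exact sub_lt_iff_lt_add.1 (hlo hi h hij)
    · exact lt_sub_iff_add_lt.1 (hhi hi h hij)
    · rw [hxi, hyi, add_mem_cancel_left hxj, add_mem_cancel_left hy, hji.mem_iff]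
  · have hmem' := mt hji.mem_iff.2 hmem
    rw [hxi, hyi]
    constructor
    · rw [sign_add_of_mem_of_notMem hK hxj hmem, sign_add_of_mem_of_notMem hL hy hmem',
        hji.sign_eq]
    · rw [add_mem_cancel_left hxj, add_mem_cancel_left hy, hji.mem_iff]

theorem exists_samePosition_sub_of_notMem (hK : (K : Set M).OrdConnected)
    (hL : (L : Set N).OrdConnected) (hLtop : L ≠ ⊤)
    (huv : ∀ i ∈ J, ∀ j ∈ J, SamePosition K L (u i - u j) (v i - v j)) {x : M}
    (hx : ∀ i ∈ J, x - u i ∉ K) :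
    ∃ y, ∀ i ∈ J, SamePosition K L (x - u i) (y - v i) := by
  classical
  have hne {i : ι} (hi : i ∈ J) : x ≠ u i := fun h => hx i hi (by simp [h])
  obtain ⟨y, hlo, hhi⟩ := exists_between_notMem hL hLtop
    (lo := {i ∈ J | u i < x}.image v) (hi := {i ∈ J | x < u i}.image v) (by
      simp only [Finset.forall_mem_image, Finset.mem_filter]
      rintro a ⟨ha, hax⟩ b ⟨hb, hxb⟩
      exact sub_neg.1 ((huv a ha b hb).neg_iff.1 (sub_neg.2 (hax.trans hxb)))) (by
      simp only [Finset.forall_mem_image, Finset.mem_filter]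
      rintro a ⟨ha, hax⟩ b ⟨hb, hxb⟩ hmem
      exact hx a ha (mem_of_nonneg_of_le hK (sub_nonneg.2 hax.le) (sub_le_sub_right hxb.le _)
        ((huv b hb a ha).mem_iff.2 hmem)))
  simp only [Finset.forall_mem_image, Finset.mem_filter, and_imp] at hlo hhi
  refine ⟨y, fun i hi => ⟨sign_sub_eq_of_lt_imp (hne hi) (fun h => (hlo hi h).1)
    (fun h => (hhi hi h).1), iff_of_false (hx i hi) ?_⟩⟩
  rcases lt_or_gt_of_ne (hne hi) with h | h
  · exact (hhi hi h).2
  · exact (hlo hi h).2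

theorem exists_samePosition_sub (hK : (K : Set M).OrdConnected) (hL : (L : Set N).OrdConnected)
    (hLbot : L ≠ ⊥) (htop : L = ⊤ → K = ⊤)
    (huv : ∀ i ∈ J, ∀ j ∈ J, SamePosition K L (u i - u j) (v i - v j)) (x : M) :
    ∃ y, ∀ i ∈ J, SamePosition K L (x - u i) (y - v i) := by
  by_cases hroot : ∃ j ∈ J, x = u j
  · obtain ⟨j, hj, rfl⟩ := hroot
    exact ⟨v j, huv j hj⟩
  push Not at hroot
  by_cases hnear : ∃ j ∈ J, x - u j ∈ K
  · obtain ⟨j, hj, hxj⟩ := hnear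
    exact exists_samePosition_sub_of_mem hK hL hLbot huv hroot hj hxj
  push Not at hnear
  rcases J.eq_empty_or_nonempty with rfl | ⟨j, hj⟩
  · exact ⟨0, by simp⟩
  refine exists_samePosition_sub_of_notMem hK hL (fun hLtop => hnear j hj ?_) huv hnear
  rw [htop hLtop]
  exact Submodule.mem_top

end ConvexSubspace

theorem exists_intCast_eq_mul_of_den_dvd {q : ℚ} {m : ℕ} (h : q.den ∣ m) :
    ∃ k : ℤ, (k : ℚ) = m * q := by
  obtain ⟨d, rfl⟩ := h
  refine ⟨d * q.num, ?_⟩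
  push_cast
  rw [← Rat.den_mul_eq_num]
  ring

/-- Affine forms `∑ i, c.1 i • xᵢ + c.2 • 1` with rational coefficients in `n` variables. -/
abbrev Form (n : ℕ) := (Fin n → ℚ) × ℚ

namespace Form

variable {n : ℕ}

/-- The constant affine form `q • 1`. -/
def const (n : ℕ) (q : ℚ) : Form n := (0, q)

/-- The part of an affine form that does not involve the last variable. -/
def front (c : Form (n + 1)) : Form n := (fun i => c.1 i.castSucc, c.2)

/-- The coefficient of the last variable. -/
def last (c : Form (n + 1)) : ℚ := c.1 (Fin.last n)

/-- The solution of `c = 0` for the last variable; it is `0` if that variable does not occur. -/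
def root (c : Form (n + 1)) : Form n := -(c.last⁻¹ • c.front)

/-- Substitution of `τ` for the last variable of `c`. -/
def subst (c : Form (n + 1)) (τ : Form n) : Form n := c.front + c.last • τ

/-- The affine forms with integer coefficients. -/
def integral (n : ℕ) : AddSubgroup (Form n) :=
  (AddSubgroup.pi Set.univ fun _ => (Int.castAddHom ℚ).range).prod (Int.castAddHom ℚ).range

theorem mem_integral {c : Form n} :
    c ∈ integral n ↔ (∀ i, ∃ k : ℤ, k = c.1 i) ∧ ∃ k : ℤ, k = c.2 := by
  simp only [integral, AddSubgroup.mem_prod, AddSubgroup.mem_pi, Set.mem_univ, true_imp_iff,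
    AddMonoidHom.mem_range, Int.coe_castAddHom]

/-- The affine form `c` without its constant term. -/
def linearPart (c : Form n) : Form n := (c.1, 0)

theorem linearPart_mem_integral {c : Form n} (hc : c ∈ integral n) : c.linearPart ∈ integral n :=
  mem_integral.2 ⟨(mem_integral.1 hc).1, 0, Int.cast_zero⟩

/-- A common denominator of the coefficients of `c`. -/
def den (c : Form n) : ℕ := (∏ i, (c.1 i).den) * c.2.den

theorem den_pos (c : Form n) : 0 < c.den :=
  Nat.mul_pos (Finset.prod_pos fun i _ => (c.1 i).den_pos) c.2.den_pos

theorem smul_mem_integral_of_den_dvd {c : Form n} {m : ℕ} (h : c.den ∣ m) :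
    (m : ℚ) • c ∈ integral n :=
  mem_integral.2 ⟨fun i => exists_intCast_eq_mul_of_den_dvd
    ((Finset.dvd_prod_of_mem _ (Finset.mem_univ i)).trans ((Nat.dvd_mul_right _ _).trans h)),
    exists_intCast_eq_mul_of_den_dvd ((Nat.dvd_mul_left _ _).trans h)⟩

end Form

/-- The data of a model of `GGG` on a divisible ordered abelian group `Q`, regarded as an ordered
`ℚ`-vector space. The convex subgroup `L` is then automatically a subspace. -/
structure Model (Q : Type*) [AddCommGroup Q] [LinearOrder Q] [Module ℚ Q] where
  one : Q
  Z : AddSubgroup Q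
  L : Submodule ℚ Q
  one_pos : 0 < one
  one_mem_Z : one ∈ Z
  one_le_of_mem_Z : ∀ z ∈ Z, 0 < z → one ≤ z
  exists_floor : ∀ x : Q, ∃ z ∈ Z, z ≤ x ∧ x < z + one
  ordConnected_L : (L : Set Q).OrdConnected
  one_mem_L : one ∈ L

namespace Model

variable {Q : Type*} [AddCommGroup Q] [LinearOrder Q] [Module ℚ Q] (G : Model Q)

/-- The integer part of `x`. -/
noncomputable def floor (x : Q) : Q := (G.exists_floor x).choose

/-- The fractional part of `x`. -/
noncomputable def fract (x : Q) : Q := x - G.floor x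

theorem L_ne_bot : G.L ≠ ⊥ :=
  (Submodule.ne_bot_iff _).2 ⟨G.one, G.one_mem_L, G.one_pos.ne'⟩

theorem floor_mem_Z (x : Q) : G.floor x ∈ G.Z := (G.exists_floor x).choose_spec.1

theorem floor_add_fract (x : Q) : G.floor x + G.fract x = x := add_sub_cancel _ _

/-- Evaluation of affine forms at the tuple `x`. -/
def eval {n : ℕ} (x : Fin n → Q) : Form n →ₗ[ℚ] Q :=
  (Fintype.linearCombination ℚ x).coprod (LinearMap.toSpanSingleton ℚ Q G.one)

variable {n : ℕ} (x : Fin n → Q)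

theorem eval_apply (c : Form n) : G.eval x c = ∑ i, c.1 i • x i + c.2 • G.one := rfl

theorem eval_const (q : ℚ) : G.eval x (.const n q) = q • G.one := by
  simp [eval_apply, Form.const]

theorem eval_fin_zero (x : Fin 0 → Q) (c : Form 0) : G.eval x c = c.2 • G.one := by
  simp [eval_apply]

theorem eval_snoc (a : Q) (c : Form (n + 1)) :
    G.eval (Fin.snoc x a) c = G.eval x c.front + c.last • a := by
  simp only [eval_apply, Form.front, Form.last, Fin.sum_univ_castSucc, Fin.snoc_castSucc,
    Fin.snoc_last]
  abel

theorem eval_snoc_of_last_ne_zero (a : Q) {c : Form (n + 1)} (hc : c.last ≠ 0) :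
    G.eval (Fin.snoc x a) c = c.last • (a - G.eval x c.root) := by
  rw [eval_snoc, Form.root, map_neg, map_smul, sub_neg_eq_add, smul_add, smul_inv_smul₀ hc,
    add_comm]

theorem eval_subst (c : Form (n + 1)) (τ : Form n) :
    G.eval x (c.subst τ) = G.eval (Fin.snoc x (G.eval x τ)) c := by
  rw [eval_snoc, Form.subst, map_add, map_smul]

theorem eval_add (z f : Fin n → Q) (c : Form n) :
    G.eval (z + f) c = G.eval z c.linearPart + G.eval f c := by
  simp [eval_apply, Form.linearPart, Finset.sum_add_distrib, add_assoc]

theorem intCast_smul_mem_Z {z : Q} (hz : z ∈ G.Z) (k : ℤ) : (k : ℚ) • z ∈ G.Z := by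
  rw [Int.cast_smul_eq_zsmul]
  exact zsmul_mem hz k

variable {x} in
theorem eval_mem_Z (hx : ∀ i, x i ∈ G.Z) {c : Form n} (hc : c ∈ Form.integral n) :
    G.eval x c ∈ G.Z := by
  obtain ⟨hcoeff, k, hk⟩ := Form.mem_integral.1 hc
  rw [eval_apply]
  refine add_mem (sum_mem fun i _ => ?_) (hk ▸ G.intCast_smul_mem_Z G.one_mem_Z k)
  obtain ⟨k, hk⟩ := hcoeff i
  exact hk ▸ G.intCast_smul_mem_Z (hx i) k

variable {x} in
theorem eval_mem_L (hx : ∀ i, x i ∈ G.L) (c : Form n) : G.eval x c ∈ G.L := by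
  rw [eval_apply]
  exact add_mem (sum_mem fun i _ => G.L.smul_mem _ (hx i)) (G.L.smul_mem _ G.one_mem_L)

variable [IsOrderedAddMonoid Q]

theorem fract_nonneg (x : Q) : 0 ≤ G.fract x :=
  sub_nonneg.2 (G.exists_floor x).choose_spec.2.1

theorem fract_lt_one (x : Q) : G.fract x < G.one :=
  sub_lt_iff_lt_add'.2 (G.exists_floor x).choose_spec.2.2

variable {G} in
theorem eq_zero_of_mem_Z {z : Q} (hz : z ∈ G.Z) (hlo : -G.one < z) (hhi : z < G.one) : z = 0 := by
  rcases lt_trichotomy z 0 with hneg | hzero | hpos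
  · exact absurd (G.one_le_of_mem_Z _ (neg_mem hz) (neg_pos.2 hneg)) (neg_lt.1 hlo).not_ge
  · exact hzero
  · exact absurd (G.one_le_of_mem_Z z hz hpos) hhi.not_ge

theorem floor_add_of_mem_Z {z f : Q} (hz : z ∈ G.Z) (hf : 0 ≤ f) (hf' : f < G.one) :
    G.floor (z + f) = z := by
  have hsum := G.floor_add_fract (z + f)
  have hnonneg := G.fract_nonneg (z + f)
  have hlt := G.fract_lt_one (z + f)
  refine sub_eq_zero.1 (eq_zero_of_mem_Z (sub_mem (G.floor_mem_Z _) hz) ?_ ?_) <;> grind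

theorem fract_add_of_mem_Z {z f : Q} (hz : z ∈ G.Z) (hf : 0 ≤ f) (hf' : f < G.one) :
    G.fract (z + f) = f := by
  rw [fract, G.floor_add_of_mem_Z hz hf hf', add_sub_cancel_left]

theorem exists_eq_smul_one_of_mem_Z {z : Q} (hz : z ∈ G.Z) {a b : ℤ} (ha : (a : ℚ) • G.one ≤ z)
    (hb : z ≤ (b : ℚ) • G.one) : ∃ k ∈ Finset.Icc a b, z = (k : ℚ) • G.one := by
  have le_of_le {k l : ℤ} (h : (k : ℚ) • G.one ≤ (l : ℚ) • G.one) : k ≤ l := by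
    exact_mod_cast le_of_smul_le_smul_right h G.one_pos
  obtain ⟨k, hk, hmax⟩ := Int.exists_greatest_of_bdd
    (P := fun k : ℤ => (k : ℚ) • G.one ≤ z) ⟨b, fun k hk => le_of_le (hk.trans hb)⟩ ⟨a, ha⟩
  have hlt : z < (k : ℚ) • G.one + G.one := by
    by_contra! h
    have := hmax (k + 1) (by rwa [Int.cast_add, Int.cast_one, add_smul, one_smul])
    omega
  have hzk : z = (k : ℚ) • G.one := sub_eq_zero.1 <|
    eq_zero_of_mem_Z (sub_mem hz (G.intCast_smul_mem_Z G.one_mem_Z k))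
      ((neg_neg_of_pos G.one_pos).trans_le (sub_nonneg.2 hk)) (sub_lt_iff_lt_add'.2 hlt)
  exact ⟨k, Finset.mem_Icc.2 ⟨hmax a ha, le_of_le (hzk ▸ hb)⟩, hzk⟩

theorem smul_one_mem_Z_iff (q : ℚ) : q • G.one ∈ G.Z ↔ ∃ k : ℤ, (k : ℚ) = q := by
  refine ⟨fun h => ?_, fun ⟨k, hk⟩ => hk ▸ G.intCast_smul_mem_Z G.one_mem_Z k⟩
  obtain ⟨k, -, hk⟩ := G.exists_eq_smul_one_of_mem_Z h (a := ⌊q⌋) (b := ⌈q⌉)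
    (smul_le_smul_of_nonneg_right (Int.floor_le q) G.one_pos.le)
    (smul_le_smul_of_nonneg_right (Int.le_ceil q) G.one_pos.le)
  exact ⟨k, (smul_left_injective ℚ G.one_pos.ne' hk).symm⟩

theorem exists_smul_add_le {m : ℕ} (hm : 0 < m) (r y : Q) :
    ∃ q ∈ G.Z, (m : ℚ) • q + r ≤ y ∧ y < (m : ℚ) • q + r + (m : ℚ) • G.one := by
  have hm' : (0 : ℚ) < m := Nat.cast_pos.2 hm
  obtain ⟨q, hq, hle, hlt⟩ := G.exists_floor ((m : ℚ)⁻¹ • (y - r))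
  rw [le_inv_smul_iff_of_pos hm', le_sub_iff_add_le] at hle
  rw [inv_smul_lt_iff_of_pos hm', smul_add, sub_lt_iff_lt_add, add_right_comm] at hlt
  exact ⟨q, hq, hle, hlt⟩

theorem exists_eq_smul_add_remainder {m : ℕ} (hm : 0 < m) {x : Q} (hx : x ∈ G.Z) :
    ∃ q ∈ G.Z, ∃ r < m, x = (m : ℚ) • q + (r : ℚ) • G.one := by
  obtain ⟨q, hq, hle, hlt⟩ := G.exists_smul_add_le hm 0 x
  rw [add_zero] at hle hlt
  obtain ⟨k, hk, hxk⟩ := G.exists_eq_smul_one_of_mem_Z (a := 0) (b := m)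
    (sub_mem hx (G.intCast_smul_mem_Z hq m)) (by simpa using hle)
    (by simpa using hlt.le.trans_eq (add_comm _ _))
  lift k to ℕ using (Finset.mem_Icc.1 hk).1
  simp only [Int.cast_natCast] at hxk
  have hkm : (k : ℚ) • G.one < (m : ℚ) • G.one := hxk ▸ sub_lt_iff_lt_add'.2 hlt
  exact ⟨q, hq, k, by exact_mod_cast lt_of_smul_lt_smul_right hkm G.one_pos.le,
    sub_eq_iff_eq_add'.1 hxk⟩

theorem abs_eval_le {f : Fin n → Q} (hf : ∀ i, 0 ≤ f i) (hf' : ∀ i, f i < G.one) (c : Form n) :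
    |G.eval f c| ≤ (∑ i, |c.1 i| + |c.2|) • G.one :=
  calc |G.eval f c| ≤ |∑ i, c.1 i • f i| + |c.2 • G.one| := abs_add_le _ _
    _ ≤ ∑ i, |c.1 i • f i| + |c.2 • G.one| := by
        gcongr
        exact Finset.abs_sum_le_sum_abs _ _
    _ ≤ ∑ i, |c.1 i| • G.one + |c.2| • G.one := by
        gcongr with i
        · rw [abs_smul, abs_of_nonneg (hf i)]
          exact smul_le_smul_of_nonneg_left (hf' i).le (abs_nonneg _)
        · rw [abs_smul, abs_of_pos G.one_pos]
    _ = (∑ i, |c.1 i| + |c.2|) • G.one := by rw [add_smul, Finset.sum_smul]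

end Model

namespace Form

variable {n : ℕ} (S : Finset (Form (n + 1)))

/-- Endpoints of the intervals in which the last coordinate of a tuple with entries in `[0, 1)` has
to be located in order to determine the signs of the forms in `S`. -/
def fracPoints : Finset (Form n) := {0, const n 1} ∪ S.image root

/-- Forms whose signs at a tuple with entries in `[0, 1)` determine which signs of the forms in `S`
can be realised by adding an entry. -/
def fracStep : Finset (Form n) :=
  S.image front ∪ Finset.image₂ (· - ·) (fracPoints S) (fracPoints S)

/-- A common denominator of the forms in `S` and of their roots. Residues modulo this number
determine which forms in `S` take integral values. -/
def modulus : ℕ := ∏ c ∈ S, c.den * c.root.den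

/-- The points at distance at most `modulus S` to the right of a root, at which the last coordinate
of an integral tuple can be located. -/
def intPoints : Finset (Form n) :=
  Finset.image₂ (fun c (k : ℕ) => c.root + const n (k / modulus S))
    S (Finset.range (modulus S * modulus S + 1))

/-- Forms whose values at an integral tuple determine which behaviour of the forms in `S` can be
realised by adding an integral entry. -/
def intStep : Finset (Form n) :=
  Finset.image₂ (· - ·) (intPoints S) (intPoints S) ∪
    Finset.image₂ (fun c (r : ℕ) => c.front + const n (c.last * r)) S (Finset.range (modulus S)) ∪
    intPoints S ∪ Finset.image₂ subst S (intPoints S)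

theorem modulus_pos : 0 < modulus S :=
  Finset.prod_pos fun c _ => Nat.mul_pos c.den_pos c.root.den_pos

variable {S} {c : Form (n + 1)}

theorem modulus_smul_mem_integral (hc : c ∈ S) : (modulus S : ℚ) • c ∈ integral (n + 1) :=
  smul_mem_integral_of_den_dvd ((Nat.dvd_mul_right _ _).trans (Finset.dvd_prod_of_mem _ hc))

theorem modulus_smul_root_mem_integral (hc : c ∈ S) : (modulus S : ℚ) • c.root ∈ integral n :=
  smul_mem_integral_of_den_dvd ((Nat.dvd_mul_left _ _).trans (Finset.dvd_prod_of_mem _ hc))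

theorem root_add_const_mem_intPoints (hc : c ∈ S) {k : ℕ} (hk : k ≤ modulus S * modulus S) :
    c.root + const n (k / modulus S) ∈ intPoints S :=
  Finset.mem_image₂_of_mem hc (Finset.mem_range_succ_iff.2 hk)

theorem image₂_sub_intPoints_subset_intStep :
    Finset.image₂ (· - ·) (intPoints S) (intPoints S) ⊆ intStep S :=
  Finset.subset_union_left.trans (Finset.subset_union_left.trans Finset.subset_union_left)

theorem front_add_const_mem_intStep (hc : c ∈ S) {r : ℕ} (hr : r < modulus S) :
    c.front + const n (c.last * r) ∈ intStep S :=
  Finset.mem_union_left _ (Finset.mem_union_left _ (Finset.mem_union_right _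
    (Finset.mem_image₂_of_mem hc (Finset.mem_range.2 hr))))

theorem intPoints_subset_intStep : intPoints S ⊆ intStep S :=
  Finset.subset_union_right.trans Finset.subset_union_left

theorem subst_mem_intStep (hc : c ∈ S) {τ : Form n} (hτ : τ ∈ intPoints S) :
    c.subst τ ∈ intStep S :=
  Finset.mem_union_right _ (Finset.mem_image₂_of_mem hc hτ)

end Form

namespace Model

variable {Q : Type*} [AddCommGroup Q] [LinearOrder Q] [Module ℚ Q] (G : Model Q) {n : ℕ}
  {S : Finset (Form (n + 1))} {c : Form (n + 1)}

theorem eval_snoc_mem_Z_iff (hc : c ∈ S)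
    (z : Fin n → Q) {q : Q} (hq : q ∈ G.Z) (r : ℚ) :
    G.eval (Fin.snoc z ((Form.modulus S : ℚ) • q + r • G.one)) c ∈ G.Z ↔
      G.eval z (c.front + .const n (c.last * r)) ∈ G.Z := by
  obtain ⟨k, hk⟩ := (Form.mem_integral.1 (Form.modulus_smul_mem_integral hc)).1 (Fin.last n)
  have hk' : (k : ℚ) = Form.modulus S * c.last := hk
  have hsplit : G.eval (Fin.snoc z ((Form.modulus S : ℚ) • q + r • G.one)) c =
      (k : ℚ) • q + G.eval z (c.front + .const n (c.last * r)) := by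
    rw [G.eval_snoc, map_add, G.eval_const, hk']
    module
  rw [hsplit, add_mem_cancel_left (G.intCast_smul_mem_Z hq k)]

variable [IsOrderedAddMonoid Q]

theorem exists_mem_intPoints_eq_eval (hc : c ∈ S) {z : Fin n → Q} (hz : ∀ i, z i ∈ G.Z)
    {x : Q} (hx : x ∈ G.Z) (hle : G.eval z c.root ≤ x)
    (hle' : x ≤ G.eval z c.root + (Form.modulus S : ℚ) • G.one) :
    ∃ τ ∈ Form.intPoints S, x = G.eval z τ := by
  set m := Form.modulus S
  have hm : (0 : ℚ) < m := Nat.cast_pos.2 (Form.modulus_pos S)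
  have hmem : (m : ℚ) • (x - G.eval z c.root) ∈ G.Z := by
    rw [smul_sub, ← map_smul]
    exact sub_mem (G.intCast_smul_mem_Z hx m)
      (G.eval_mem_Z hz (Form.modulus_smul_root_mem_integral hc))
  obtain ⟨k, hk, hxk⟩ := G.exists_eq_smul_one_of_mem_Z hmem (a := 0) (b := m * m)
    (by simpa using smul_nonneg hm.le (sub_nonneg.2 hle)) (by
      push_cast
      rw [mul_smul]
      exact smul_le_smul_of_nonneg_left (sub_le_iff_le_add'.2 hle') hm.le)
  lift k to ℕ using (Finset.mem_Icc.1 hk).1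
  refine ⟨_, Form.root_add_const_mem_intPoints hc (k := k)
    (by exact_mod_cast (Finset.mem_Icc.1 hk).2), ?_⟩
  rw [Int.cast_natCast] at hxk
  rw [map_add, G.eval_const, div_eq_inv_mul, mul_smul, ← hxk, inv_smul_smul₀ hm.ne',
    add_sub_cancel]

end Model

section Agreement

variable {M N : Type*}
  [AddCommGroup M] [LinearOrder M] [Module ℚ M] [AddCommGroup N] [LinearOrder N] [Module ℚ N]
  (G : Model M) (H : Model N) {n : ℕ}

/-- The forms in `S` take values of the same sign, and with the same membership in `Z` and in `L`,
at the tuples `z` and `w`. -/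
def IntAgree (S : Finset (Form n)) (z : Fin n → M) (w : Fin n → N) : Prop :=
  ∀ c ∈ S, SamePosition G.L H.L (G.eval z c) (H.eval w c) ∧ (G.eval z c ∈ G.Z ↔ H.eval w c ∈ H.Z)

/-- The forms in `T` take values of the same sign at the tuples `f` and `g`. -/
def SignAgree (T : Finset (Form n)) (f : Fin n → M) (g : Fin n → N) : Prop :=
  ∀ c ∈ T, sign (G.eval f c) = sign (H.eval g c)

variable {G H}

theorem IntAgree.symm {S : Finset (Form n)} {z : Fin n → M} {w : Fin n → N}
    (h : IntAgree G H S z w) : IntAgree H G S w z :=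
  fun c hc => ⟨(h c hc).1.symm, (h c hc).2.symm⟩

theorem SignAgree.symm {T : Finset (Form n)} {f : Fin n → M} {g : Fin n → N}
    (h : SignAgree G H T f g) : SignAgree H G T g f :=
  fun c hc => (h c hc).symm

theorem samePosition_top_iff {a : M} {b : N} :
    SamePosition (⊤ : Submodule ℚ M) (⊤ : Submodule ℚ N) a b ↔ sign a = sign b :=
  ⟨fun h => h.sign_eq, fun h => ⟨h, iff_of_true trivial trivial⟩⟩

variable [IsOrderedAddMonoid M] [IsOrderedAddMonoid N] {K : Submodule ℚ M} {L : Submodule ℚ N}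

theorem samePosition_eval_snoc {x : Fin n → M} {y : Fin n → N} {a : M} {b : N} {c : Form (n + 1)}
    (hfront : SamePosition K L (G.eval x c.front) (H.eval y c.front))
    (hroot : SamePosition K L (a - G.eval x c.root) (b - H.eval y c.root)) :
    SamePosition K L (G.eval (Fin.snoc x a) c) (H.eval (Fin.snoc y b) c) := by
  by_cases hc : c.last = 0
  · simpa only [Model.eval_snoc, hc, zero_smul, add_zero] using hfront
  · simpa only [G.eval_snoc_of_last_ne_zero _ _ hc, H.eval_snoc_of_last_ne_zero _ _ hc] using
      hroot.smul c.last

theorem exists_samePosition_sub_eval (hK : (K : Set M).OrdConnected) (hL : (L : Set N).OrdConnected)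
    (hLbot : L ≠ ⊥) (htop : L = ⊤ → K = ⊤) {x : Fin n → M} {y : Fin n → N} {P : Finset (Form n)}
    (hP : ∀ d ∈ Finset.image₂ (· - ·) P P, SamePosition K L (G.eval x d) (H.eval y d)) (a : M) :
    ∃ b, ∀ τ ∈ P, SamePosition K L (a - G.eval x τ) (b - H.eval y τ) := by
  refine exists_samePosition_sub hK hL hLbot htop (fun τ hτ σ hσ => ?_) a
  simpa only [map_sub] using hP _ (Finset.mem_image₂_of_mem hτ hσ)

theorem exists_signAgree_snoc {T : Finset (Form (n + 1))} {f : Fin n → M} {g : Fin n → N}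
    (hfg : SignAgree G H (Form.fracStep T) f g) {a : M} (ha : 0 ≤ a) (ha' : a < G.one) :
    ∃ b, 0 ≤ b ∧ b < H.one ∧ SignAgree G H T (Fin.snoc f a) (Fin.snoc g b) := by
  have : Nontrivial N := nontrivial_of_ne H.one 0 H.one_pos.ne'
  obtain ⟨b, hb⟩ := exists_samePosition_sub_eval (K := ⊤) (L := ⊤) Set.ordConnected_univ
    Set.ordConnected_univ top_ne_bot (fun _ => rfl) (fun d hd => samePosition_top_iff.2
      (hfg d (Finset.mem_union_right _ hd))) a
  have hzero := hb 0 (by simp [Form.fracPoints])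
  have hone := hb (.const n 1) (by simp [Form.fracPoints])
  rw [map_zero, map_zero, sub_zero, sub_zero] at hzero
  rw [Model.eval_const, Model.eval_const, one_smul, one_smul] at hone
  refine ⟨b, not_lt.1 (mt hzero.neg_iff.2 ha.not_gt), sub_neg.1 (hone.neg_iff.1 (sub_neg.2 ha')),
    fun c hc => (samePosition_eval_snoc (samePosition_top_iff.2 ?_) (hb _ ?_)).sign_eq⟩
  · exact hfg _ (Finset.mem_union_left _ (Finset.mem_image_of_mem _ hc))
  · exact Finset.mem_union_right _ (Finset.mem_image_of_mem _ hc)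

theorem SamePosition.sub_of_le_of_lt_add (hL : (L : Set N).OrdConnected) {ρ μ x : M} {σ ν y y' : N}
    (hμ : 0 ≤ μ) (hν : ν ∈ L) (hfar : x < ρ ∨ ρ + μ < x)
    (hleft : SamePosition K L (x - ρ) (y - σ))
    (hright : SamePosition K L (x - (ρ + μ)) (y - (σ + ν)))
    (hle : y' ≤ y) (hlt : y < y' + ν) : SamePosition K L (x - ρ) (y' - σ) := by
  constructor
  · rcases hfar with h | h
    · have hy := hleft.neg_iff.1 (sub_neg.2 h)
      rw [sign_neg (sub_neg.2 h), sign_neg ((sub_le_sub_right hle σ).trans_lt hy)]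
    · have hy := hright.pos_iff.1 (sub_pos.2 h)
      rw [sign_pos (sub_pos.2 ((le_add_of_nonneg_right hμ).trans_lt h)), sign_pos (by grind)]
  · have hdiff : y - y' ∈ L :=
      mem_of_nonneg_of_le hL (sub_nonneg.2 hle) (sub_le_iff_le_add'.2 hlt.le) hν
    rw [hleft.mem_iff, ← sub_add_sub_cancel y y' σ, add_mem_cancel_left hdiff]

theorem exists_intAgree_snoc_of_far (htop : H.L = ⊤ → G.L = ⊤) {S : Finset (Form (n + 1))}
    {z : Fin n → M} {w : Fin n → N} (hzw : IntAgree G H (Form.intStep S) z w)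
    {x : M} (hx : x ∈ G.Z)
    (hfar : ∀ c ∈ S, x < G.eval z c.root ∨
      G.eval z c.root + (Form.modulus S : ℚ) • G.one < x) :
    ∃ y ∈ H.Z, IntAgree G H S (Fin.snoc z x) (Fin.snoc w y) := by
  have hm := Form.modulus_pos S
  have hm' : (0 : ℚ) < Form.modulus S := Nat.cast_pos.2 hm
  obtain ⟨q, hq, r, hr, rfl⟩ := G.exists_eq_smul_add_remainder hm hx
  obtain ⟨y, hy⟩ := exists_samePosition_sub_eval G.ordConnected_L H.ordConnected_L H.L_ne_bot htop
    (fun d hd => (hzw d (Form.image₂_sub_intPoints_subset_intStep hd)).1)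
    ((Form.modulus S : ℚ) • q + (r : ℚ) • G.one)
  obtain ⟨q', hq', hle, hlt⟩ := H.exists_smul_add_le hm ((r : ℚ) • H.one) y
  refine ⟨_, add_mem (H.intCast_smul_mem_Z hq' (Form.modulus S))
    (H.intCast_smul_mem_Z H.one_mem_Z r), fun c hc => ?_⟩
  have hresidue {s : ℕ} (hs : s < Form.modulus S) :=
    hzw _ (Form.front_add_const_mem_intStep hc hs)
  have hleft := hy _ (Form.root_add_const_mem_intPoints hc (Nat.zero_le _))
  have hright := hy _ (Form.root_add_const_mem_intPoints hc le_rfl)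
  simp only [map_add, Model.eval_const, Nat.cast_zero, zero_div, zero_smul, add_zero, Nat.cast_mul,
    mul_self_div_self] at hleft hright
  refine ⟨samePosition_eval_snoc ?_ (hleft.sub_of_le_of_lt_add H.ordConnected_L
    (smul_nonneg hm'.le G.one_pos.le) (H.L.smul_mem _ H.one_mem_L) (hfar c hc) hright hle hlt), ?_⟩
  · simpa [Model.eval_const] using (hresidue hm).1
  · exact (G.eval_snoc_mem_Z_iff hc z hq r).trans
      ((hresidue hr).2.trans (H.eval_snoc_mem_Z_iff hc w hq' r).symm)

theorem exists_intAgree_snoc (htop : H.L = ⊤ → G.L = ⊤) {S : Finset (Form (n + 1))}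
    {z : Fin n → M} {w : Fin n → N} (hz : ∀ i, z i ∈ G.Z)
    (hzw : IntAgree G H (Form.intStep S) z w) {x : M} (hx : x ∈ G.Z) :
    ∃ y ∈ H.Z, IntAgree G H S (Fin.snoc z x) (Fin.snoc w y) := by
  by_cases hnear : ∃ c ∈ S, G.eval z c.root ≤ x ∧
      x ≤ G.eval z c.root + (Form.modulus S : ℚ) • G.one
  · obtain ⟨c, hc, hle, hle'⟩ := hnear
    obtain ⟨τ, hτ, rfl⟩ := G.exists_mem_intPoints_eq_eval hc hz hx hle hle'
    refine ⟨H.eval w τ, (hzw τ (Form.intPoints_subset_intStep hτ)).2.1 hx, fun d hd => ?_⟩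
    simpa only [Model.eval_subst] using hzw _ (Form.subst_mem_intStep hd hτ)
  · refine exists_intAgree_snoc_of_far htop hzw hx fun c hc => ?_
    by_contra! h
    exact hnear ⟨c, hc, h⟩

end Agreement

namespace Form

variable {n : ℕ} (c : Form n)

/-- Integral bound for the values of `c` at tuples with entries in `[0, 1)`. -/
def bound : ℕ := ⌈∑ i, |c.1 i| + |c.2|⌉₊

/-- The integers that can compensate a value of `c` at a tuple with entries in `[0, 1)`. -/
noncomputable def window : Finset ℤ := Finset.Icc (-c.bound) c.bound

/-- Forms whose behaviour at the integer parts of a tuple contributes to the position of the value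
of `c` at that tuple. -/
noncomputable def intAtomic : Finset (Form n) :=
  c.window.image fun k : ℤ => c.linearPart - const n k

/-- Forms whose signs at the fractional parts of a tuple contribute to the position of the value
of `c` at that tuple. -/
noncomputable def fracAtomic : Finset (Form n) := c.window.image fun k : ℤ => const n k + c

theorem zero_mem_window : 0 ∈ c.window := by simp [window]

variable {c}

theorem linearPart_mem_intAtomic : c.linearPart ∈ c.intAtomic :=
  Finset.mem_image.2 ⟨0, c.zero_mem_window, by simp [const]⟩

theorem linearPart_sub_const_mem_intAtomic {k : ℤ} (hk : k ∈ c.window) :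
    c.linearPart - const n k ∈ c.intAtomic :=
  Finset.mem_image_of_mem _ hk

theorem const_add_mem_fracAtomic {k : ℤ} (hk : k ∈ c.window) : const n k + c ∈ c.fracAtomic :=
  Finset.mem_image_of_mem _ hk

end Form

namespace Model

variable {Q : Type*} [AddCommGroup Q] [LinearOrder Q] [Module ℚ Q] (G : Model Q) {n : ℕ}

theorem eval_eq_floor_add_fract (x : Fin n → Q) (c : Form n) :
    G.eval x c = G.eval (G.floor ∘ x) c.linearPart + G.eval (G.fract ∘ x) c := by
  rw [← eval_add]
  congr 2
  exact funext fun i => (G.floor_add_fract (x i)).symm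

theorem eval_floor_linearPart_mem_Z (x : Fin n → Q) {c : Form n} (hc : c ∈ Form.integral n) :
    G.eval (G.floor ∘ x) c.linearPart ∈ G.Z :=
  G.eval_mem_Z (fun _ => G.floor_mem_Z _) (Form.linearPart_mem_integral hc)

theorem sign_eval_of_floor_eq {x : Fin n → Q} {c : Form n} {k : ℤ}
    (h : G.eval (G.floor ∘ x) c.linearPart = (k : ℚ) • G.one) :
    sign (G.eval x c) = sign (G.eval (G.fract ∘ x) (.const n k + c)) := by
  rw [eval_eq_floor_add_fract, h, map_add (G.eval _), eval_const]

variable [IsOrderedAddMonoid Q]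

theorem fract_mem_L (x : Q) : G.fract x ∈ G.L :=
  mem_of_nonneg_of_le G.ordConnected_L (G.fract_nonneg x) (G.fract_lt_one x).le G.one_mem_L

theorem eval_mem_L_iff_floor (x : Fin n → Q) (c : Form n) :
    G.eval x c ∈ G.L ↔ G.eval (G.floor ∘ x) c.linearPart ∈ G.L := by
  have hfract : G.eval (G.fract ∘ x) c ∈ G.L := G.eval_mem_L (fun _ => G.fract_mem_L _) c
  rw [eval_eq_floor_add_fract, add_mem_cancel_right hfract]

theorem abs_eval_fract_le (x : Fin n → Q) (c : Form n) :
    |G.eval (G.fract ∘ x) c| ≤ (c.bound : ℚ) • G.one :=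
  (G.abs_eval_le (fun _ => G.fract_nonneg _) (fun _ => G.fract_lt_one _) c).trans
    (smul_le_smul_of_nonneg_right (Nat.le_ceil _) G.one_pos.le)

theorem exists_mem_window_eq_smul_one {c : Form n} {z : Q} (hz : z ∈ G.Z)
    (hle : |z| ≤ (c.bound : ℚ) • G.one) : ∃ k ∈ c.window, z = (k : ℚ) • G.one :=
  G.exists_eq_smul_one_of_mem_Z hz (by simpa using (abs_le.1 hle).1)
    (by simpa using (abs_le.1 hle).2)

theorem eval_mem_Z_iff_exists_window (x : Fin n → Q) {c : Form n} (hc : c ∈ Form.integral n) :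
    G.eval x c ∈ G.Z ↔ ∃ k ∈ c.window, G.eval (G.fract ∘ x) (.const n k + c) = 0 := by
  rw [eval_eq_floor_add_fract, add_mem_cancel_left (G.eval_floor_linearPart_mem_Z x hc)]
  simp only [map_add, eval_const, ← neg_eq_iff_add_eq_zero (a := _ • G.one)]
  constructor
  · intro h
    obtain ⟨k, hk, hFk⟩ := G.exists_mem_window_eq_smul_one (neg_mem h)
      (by simpa only [abs_neg] using G.abs_eval_fract_le x c)
    exact ⟨k, hk, by rw [← hFk, neg_neg]⟩
  · rintro ⟨k, -, hk⟩
    exact hk ▸ neg_mem (G.intCast_smul_mem_Z G.one_mem_Z k)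

theorem sign_eval_of_bound_lt {x : Fin n → Q} {c : Form n}
    (h : (c.bound : ℚ) • G.one < |G.eval (G.floor ∘ x) c.linearPart|) :
    sign (G.eval x c) = sign (G.eval (G.floor ∘ x) c.linearPart) := by
  rw [eval_eq_floor_add_fract, add_comm]
  exact sign_add_of_abs_lt ((G.abs_eval_fract_le x c).trans_lt h)

end Model

section Atomic

variable {M N : Type*}
  [AddCommGroup M] [LinearOrder M] [Module ℚ M] [AddCommGroup N] [LinearOrder N] [Module ℚ N]
  {G : Model M} {H : Model N} {n : ℕ}
  {c : Form n} {x : Fin n → M} {y : Fin n → N}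

theorem IntAgree.eval_linearPart_eq_iff {z : Fin n → M} {w : Fin n → N}
    (h : IntAgree G H c.intAtomic z w) {k : ℤ} (hk : k ∈ c.window) :
    G.eval z c.linearPart = (k : ℚ) • G.one ↔ H.eval w c.linearPart = (k : ℚ) • H.one := by
  have hdiff := (h _ (Form.linearPart_sub_const_mem_intAtomic hk)).1.eq_zero_iff
  rwa [map_sub, map_sub, Model.eval_const, Model.eval_const, sub_eq_zero, sub_eq_zero] at hdiff

variable [IsOrderedAddMonoid N]

theorem IntAgree.bound_lt_abs_eval (hc : c ∈ Form.integral n) {z : Fin n → M} {w : Fin n → N}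
    (hw : ∀ i, w i ∈ H.Z) (h : IntAgree G H c.intAtomic z w)
    (hfar : ∀ k ∈ c.window, G.eval z c.linearPart ≠ (k : ℚ) • G.one) :
    (c.bound : ℚ) • H.one < |H.eval w c.linearPart| := by
  by_contra! hle
  obtain ⟨k, hk, hwk⟩ := H.exists_mem_window_eq_smul_one
    (H.eval_mem_Z hw (Form.linearPart_mem_integral hc)) hle
  exact hfar k hk ((h.eval_linearPart_eq_iff hk).2 hwk)

variable [IsOrderedAddMonoid M]

theorem sign_eval_eq_of_agree (hc : c ∈ Form.integral n)
    (hint : IntAgree G H c.intAtomic (G.floor ∘ x) (H.floor ∘ y))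
    (hfrac : SignAgree G H c.fracAtomic (G.fract ∘ x) (H.fract ∘ y)) :
    sign (G.eval x c) = sign (H.eval y c) := by
  by_cases hnear : ∃ k ∈ c.window, G.eval (G.floor ∘ x) c.linearPart = (k : ℚ) • G.one
  · obtain ⟨k, hk, hxk⟩ := hnear
    rw [G.sign_eval_of_floor_eq hxk, hfrac _ (Form.const_add_mem_fracAtomic hk),
      H.sign_eval_of_floor_eq ((hint.eval_linearPart_eq_iff hk).1 hxk)]
  · have hfarG : ∀ k ∈ c.window, G.eval (G.floor ∘ x) c.linearPart ≠ (k : ℚ) • G.one :=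
      fun k hk h => hnear ⟨k, hk, h⟩
    have hfarH : ∀ k ∈ c.window, H.eval (H.floor ∘ y) c.linearPart ≠ (k : ℚ) • H.one :=
      fun k hk h => hfarG k hk ((hint.eval_linearPart_eq_iff hk).2 h)
    rw [G.sign_eval_of_bound_lt
        (hint.symm.bound_lt_abs_eval hc (fun _ => G.floor_mem_Z _) hfarH),
      H.sign_eval_of_bound_lt (hint.bound_lt_abs_eval hc (fun _ => H.floor_mem_Z _) hfarG),
      (hint _ Form.linearPart_mem_intAtomic).1.sign_eq]

theorem samePosition_eval_of_agree (hc : c ∈ Form.integral n)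
    (hint : IntAgree G H c.intAtomic (G.floor ∘ x) (H.floor ∘ y))
    (hfrac : SignAgree G H c.fracAtomic (G.fract ∘ x) (H.fract ∘ y)) :
    SamePosition G.L H.L (G.eval x c) (H.eval y c) := by
  refine ⟨sign_eval_eq_of_agree hc hint hfrac, ?_⟩
  rw [G.eval_mem_L_iff_floor, H.eval_mem_L_iff_floor]
  exact (hint _ Form.linearPart_mem_intAtomic).1.mem_iff

theorem eval_mem_Z_iff_of_agree (hc : c ∈ Form.integral n)
    (hfrac : SignAgree G H c.fracAtomic (G.fract ∘ x) (H.fract ∘ y)) :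
    G.eval x c ∈ G.Z ↔ H.eval y c ∈ H.Z := by
  rw [G.eval_mem_Z_iff_exists_window x hc, H.eval_mem_Z_iff_exists_window y hc]
  refine exists_congr fun k => and_congr_right fun hk => ?_
  rw [← sign_eq_zero_iff, hfrac _ (Form.const_add_mem_fracAtomic hk), sign_eq_zero_iff]

end Atomic

section Interpretation

open Language

/-- The affine form computed by a term without parameters. -/
def termForm {n : ℕ} : L3G.Term (Empty ⊕ Fin n) → Form n
  | .var (.inr i) => (Pi.single i 1, 0)
  | .func (l := 0) f _ => .const n (Fin.val f)
  | .func (l := 2) _ ts => termForm (ts 0) + termForm (ts 1)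

theorem termForm_mem_integral {n : ℕ} (t : L3G.Term (Empty ⊕ Fin n)) :
    termForm t ∈ Form.integral n := by
  induction t with
  | var s =>
    rcases s with e | i
    · exact e.elim
    · refine Form.mem_integral.2 ⟨fun j => ⟨if j = i then 1 else 0, ?_⟩, 0, Int.cast_zero⟩
      simp [termForm, Pi.single_apply]
  | @func l f ts ih =>
    match l, f with
    | 0, f => exact Form.mem_integral.2 ⟨fun _ => ⟨0, Int.cast_zero⟩, Fin.val f, Int.cast_natCast _⟩
    | 2, _ => exact add_mem (ih 0) (ih 1)

/-- The interpretations of the symbols of `L3G` in `Q` are those given by the model `G`. -/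
structure Represents {Q : Type*} [AddCommGroup Q] [LinearOrder Q] [Module ℚ Q] [L3G.Structure Q]
    (G : Model Q) : Prop where
  add_eq : ∀ x y : Q, L3G.add x y = x + y
  zero_eq : L3G.zero Q = 0
  one_eq : L3G.one Q = G.one
  lt_iff : ∀ x y : Q, L3G.lt x y ↔ x < y
  inZ_iff : ∀ x : Q, L3G.inZ x ↔ x ∈ G.Z
  inL_iff : ∀ x : Q, L3G.inL x ↔ x ∈ G.L

namespace Represents

variable {Q : Type*} [AddCommGroup Q] [LinearOrder Q] [Module ℚ Q] [L3G.Structure Q]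
  {G : Model Q} {n : ℕ}

theorem realize_eq_eval_termForm (hG : Represents G) (x : Fin n → Q)
    (t : L3G.Term (Empty ⊕ Fin n)) :
    t.realize (Sum.elim default x) = G.eval x (termForm t) := by
  induction t with
  | var s =>
    rcases s with e | i
    · exact e.elim
    · simp [termForm, Model.eval_apply, Pi.single_apply]
  | @func l f ts ih =>
    match l, f with
    | 0, f =>
      rw [Term.realize, Subsingleton.elim (fun i => (ts i).realize _) ![], termForm,
        Model.eval_const]
      match f with
      | (0 : Fin 2) => exact hG.zero_eq.trans (by simp)
      | (1 : Fin 2) => exact hG.one_eq.trans (by simp)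
    | 2, _ =>
      rw [termForm, map_add, ← ih, ← ih, ← hG.add_eq]
      exact congrArg (Structure.funMap _) (funext (Fin.forall_fin_two.2 ⟨rfl, rfl⟩))

theorem realize_equal_iff (hG : Represents G) (x : Fin n → Q)
    (t₁ t₂ : L3G.Term (Empty ⊕ Fin n)) :
    (t₁.bdEqual t₂).Realize default x ↔ G.eval x (termForm t₁ - termForm t₂) = 0 := by
  rw [BoundedFormula.realize_bdEqual, hG.realize_eq_eval_termForm, hG.realize_eq_eval_termForm,
    map_sub, sub_eq_zero]

theorem realize_zSym_iff (hG : Represents G) (x : Fin n → Q)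
    (ts : Fin 1 → L3G.Term (Empty ⊕ Fin n)) :
    (BoundedFormula.rel L3G.zSym ts).Realize default x ↔ G.eval x (termForm (ts 0)) ∈ G.Z := by
  rw [← hG.inZ_iff, ← hG.realize_eq_eval_termForm]
  exact iff_of_eq (congrArg (Structure.RelMap _) (funext (Fin.forall_fin_one.2 rfl)))

theorem realize_lSym_iff (hG : Represents G) (x : Fin n → Q)
    (ts : Fin 1 → L3G.Term (Empty ⊕ Fin n)) :
    (BoundedFormula.rel L3G.lSym ts).Realize default x ↔ G.eval x (termForm (ts 0)) ∈ G.L := by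
  rw [← hG.inL_iff, ← hG.realize_eq_eval_termForm]
  exact iff_of_eq (congrArg (Structure.RelMap _) (funext (Fin.forall_fin_one.2 rfl)))

theorem realize_ltSym_iff [IsOrderedAddMonoid Q] (hG : Represents G) (x : Fin n → Q)
    (ts : Fin 2 → L3G.Term (Empty ⊕ Fin n)) :
    (BoundedFormula.rel L3G.ltSym ts).Realize default x ↔
      G.eval x (termForm (ts 0) - termForm (ts 1)) < 0 := by
  rw [map_sub, sub_neg, ← hG.lt_iff, ← hG.realize_eq_eval_termForm, ← hG.realize_eq_eval_termForm]
  exact iff_of_eq (congrArg (Structure.RelMap _) (funext (Fin.forall_fin_two.2 ⟨rfl, rfl⟩)))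

end Represents

end Interpretation

section Equivalence

open Language

variable {M N : Type*}
  [AddCommGroup M] [LinearOrder M] [Module ℚ M] [AddCommGroup N] [LinearOrder N] [Module ℚ N]
  {G : Model M} {H : Model N} {n : ℕ}

/-- The relation of the back-and-forth system: the integer parts of the two tuples agree on the
forms in `i.1`, and their fractional parts agree on those in `i.2`. -/
def Agree (G : Model M) (H : Model N) (n : ℕ) (i : Finset (Form n) × Finset (Form n))
    (x : Fin n → M) (y : Fin n → N) : Prop :=
  IntAgree G H i.1 (G.floor ∘ x) (H.floor ∘ y) ∧ SignAgree G H i.2 (G.fract ∘ x) (H.fract ∘ y)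

namespace Agree

variable {i j : Finset (Form n) × Finset (Form n)} {x : Fin n → M} {y : Fin n → N}

theorem anti (hij : i ≤ j) (h : Agree G H n j x y) : Agree G H n i x y :=
  ⟨fun c hc => h.1 c (hij.1 hc), fun c hc => h.2 c (hij.2 hc)⟩

theorem symm (h : Agree G H n i x y) : Agree H G n i y x :=
  ⟨h.1.symm, h.2.symm⟩

variable [IsOrderedAddMonoid M] [IsOrderedAddMonoid N]

theorem nil (i : Finset (Form 0) × Finset (Form 0)) : Agree G H 0 i default default := by
  have sign_eq (x : Fin 0 → M) (y : Fin 0 → N) (c : Form 0) :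
      sign (G.eval x c) = sign (H.eval y c) := by
    rw [G.eval_fin_zero, H.eval_fin_zero, sign_smul, sign_smul,
      sign_pos G.one_pos, sign_pos H.one_pos]
  refine ⟨fun c _ => ⟨⟨sign_eq _ _ c, iff_of_true ?_ ?_⟩, ?_⟩, fun c _ => sign_eq _ _ c⟩
  · exact G.eval_mem_L (fun i => i.elim0) c
  · exact H.eval_mem_L (fun i => i.elim0) c
  · rw [G.eval_fin_zero, H.eval_fin_zero, G.smul_one_mem_Z_iff, H.smul_one_mem_Z_iff]

theorem exists_snoc (htop : H.L = ⊤ → G.L = ⊤)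
    {i : Finset (Form (n + 1)) × Finset (Form (n + 1))}
    (h : Agree G H n (Form.intStep i.1, Form.fracStep i.2) x y) (a : M) :
    ∃ b, Agree G H (n + 1) i (Fin.snoc x a) (Fin.snoc y b) := by
  obtain ⟨z, hz, hint⟩ :=
    exists_intAgree_snoc htop (fun _ => G.floor_mem_Z _) h.1 (G.floor_mem_Z a)
  obtain ⟨f, hf, hf', hfrac⟩ := exists_signAgree_snoc h.2 (G.fract_nonneg a) (G.fract_lt_one a)
  refine ⟨z + f, ?_⟩
  rw [Agree, Fin.comp_snoc, Fin.comp_snoc, Fin.comp_snoc, Fin.comp_snoc,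
    H.floor_add_of_mem_Z hz hf hf', H.fract_add_of_mem_Z hz hf hf']
  exact ⟨hint, hfrac⟩

variable [L3G.Structure M] [L3G.Structure N]

theorem exists_realize_iff (hG : Represents G) (hH : Represents H) {φ : L3G.BoundedFormula Empty n}
    (hφ : φ.IsAtomic) :
    ∃ i, ∀ x y, Agree G H n i x y → (φ.Realize default x ↔ φ.Realize default y) := by
  cases hφ with
  | equal t₁ t₂ =>
    have hc := sub_mem (termForm_mem_integral t₁) (termForm_mem_integral t₂)
    exact ⟨(_, _), fun x y h => (hG.realize_equal_iff x t₁ t₂).trans <|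
      (samePosition_eval_of_agree hc h.1 h.2).eq_zero_iff.trans
        (hH.realize_equal_iff y t₁ t₂).symm⟩
  | @rel l r ts =>
    match l, r with
    | 1, (0 : Fin 2) =>
      exact ⟨(∅, _), fun x y h => (hG.realize_zSym_iff x ts).trans <|
        (eval_mem_Z_iff_of_agree (termForm_mem_integral _) h.2).trans
          (hH.realize_zSym_iff y ts).symm⟩
    | 1, (1 : Fin 2) =>
      exact ⟨(_, _), fun x y h => (hG.realize_lSym_iff x ts).trans <|
        (samePosition_eval_of_agree (termForm_mem_integral _) h.1 h.2).mem_iff.trans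
          (hH.realize_lSym_iff y ts).symm⟩
    | 2, () =>
      have hc := sub_mem (termForm_mem_integral (ts 0)) (termForm_mem_integral (ts 1))
      exact ⟨(_, _), fun x y h => (hG.realize_ltSym_iff x ts).trans <|
        (samePosition_eval_of_agree hc h.1 h.2).neg_iff.trans (hH.realize_ltSym_iff y ts).symm⟩

end Agree

variable [L3G.Structure M] [L3G.Structure N] [IsOrderedAddMonoid M] [IsOrderedAddMonoid N]

theorem gradedBackAndForth_agree (hG : Represents G) (hH : Represents H)
    (htop : G.L = ⊤ ↔ H.L = ⊤) : GradedBackAndForth L3G (Agree G H) where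
  anti := Agree.anti
  atomic _ := Agree.exists_realize_iff hG hH
  forth _ := ⟨_, fun _ _ h => h.exists_snoc htop.2⟩
  back _ := ⟨_, fun _ _ h b => (h.symm.exists_snoc htop.1 b).imp fun _ => Agree.symm⟩

end Equivalence

section OfIsGGGStructure

variable {M : Type*} [L3G.Structure M]

/-- The additive group of a model of `GGG`, with negatives obtained by choice. -/
noncomputable abbrev addCommGroup (hM : L3G.IsGGGStructure M) : AddCommGroup M :=
  letI : Zero M := ⟨L3G.zero M⟩
  letI : Add M := ⟨L3G.add⟩
  letI : Neg M := ⟨fun x => (hM.2.2.2.1 x).choose⟩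
  { add_assoc := hM.1
    add_comm := hM.2.1
    zero_add := fun x => (hM.2.1 _ _).trans (hM.2.2.1 x)
    add_zero := hM.2.2.1
    nsmul := L3G.nsmul
    nsmul_succ := fun _ _ => hM.2.1 _ _
    zsmul := zsmulRec L3G.nsmul
    zsmul_succ' := fun _ _ => hM.2.1 _ _
    neg_add_cancel := fun x => (hM.2.1 _ _).trans (hM.2.2.2.1 x).choose_spec }

theorem isStrictTotalOrder_lt (hM : L3G.IsGGGStructure M) :
    IsStrictTotalOrder M (L3G.lt (M := M)) := by
  obtain ⟨-, -, -, -, lt_irrefl, lt_trans, lt_trichotomy, -⟩ := hM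
  exact
    { irrefl := lt_irrefl
      trans := lt_trans
      trichotomous := fun x y hxy hyx => ((lt_trichotomy x y).resolve_left hxy).resolve_right hyx }

/-- The order of a model of `GGG`. -/
noncomputable abbrev linearOrder (hM : L3G.IsGGGStructure M) : LinearOrder M :=
  letI := isStrictTotalOrder_lt hM
  letI := Classical.decRel (L3G.lt (M := M))
  linearOrderOfSTO L3G.lt

/-- A convex subgroup of an ordered `ℚ`-vector space is a subspace. -/
def convexSubmodule {Q : Type*} [AddCommGroup Q] [LinearOrder Q] [IsOrderedAddMonoid Q]
    [Module ℚ Q] (L : AddSubgroup Q) (hL : (L : Set Q).OrdConnected) : Submodule ℚ Q where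
  toAddSubmonoid := L.toAddSubmonoid
  smul_mem' q x hx := by
    obtain ⟨k, hk⟩ := exists_nat_ge |q|
    have hle : |q • x| ≤ k • |x| := by
      rw [abs_smul, ← Nat.cast_smul_eq_nsmul ℚ]
      exact smul_le_smul_of_nonneg_right hk (abs_nonneg x)
    exact abs_mem_iff.1 (hL.out L.zero_mem (nsmul_mem (abs_mem_iff.2 hx) k) ⟨abs_nonneg _, hle⟩)

theorem exists_represents (hM : L3G.IsGGGStructure M) :
    ∃ (_ : AddCommGroup M) (_ : LinearOrder M) (_ : IsOrderedAddMonoid M) (_ : Module ℚ M)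
      (G : Model M), Represents G := by
  let _ := addCommGroup hM
  let _ := linearOrder hM
  have ⟨_, _, _, _, _, _, _, add_lt, exists_nsmul, zero_mem_Z, add_mem_Z, neg_mem_Z, one_mem_Z,
    one_pos, not_lt_one, exists_floor, zero_mem_L, add_mem_L, neg_mem_L, convex_L, one_mem_L⟩ := hM
  have : IsOrderedAddMonoid M :=
    { add_le_add_left := fun a b hab c =>
        hab.lt_or_eq.elim (fun h => le_of_lt (add_lt a b c h)) fun h => h ▸ le_rfl }
  let _ := ratModule exists_nsmul
  let L : AddSubgroup M :=
    { carrier := {x | L3G.inL x}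
      add_mem' := fun ha hb => add_mem_L _ _ ha hb
      zero_mem' := zero_mem_L
      neg_mem' := fun ha => neg_mem_L _ _ ha (add_neg_cancel _) }
  have hL : (L : Set M).OrdConnected :=
    ⟨fun x hx y hy z hz => convex_L x y z hx hy (not_lt.2 hz.1) (not_lt.2 hz.2)⟩
  let G : Model M :=
    { one := L3G.one M
      Z :=
        { carrier := {x | L3G.inZ x}
          add_mem' := fun ha hb => add_mem_Z _ _ ha hb
          zero_mem' := zero_mem_Z
          neg_mem' := fun ha => neg_mem_Z _ _ ha (add_neg_cancel _) }
      L := convexSubmodule L hL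
      one_pos := one_pos
      one_mem_Z := one_mem_Z
      one_le_of_mem_Z := fun z hz hpos => not_lt.1 (not_lt_one z hz hpos)
      exists_floor := fun x =>
        (exists_floor x).imp fun _ ⟨hz, hle, hlt⟩ => ⟨hz, not_lt.1 hle, hlt⟩
      ordConnected_L := hL
      one_mem_L := one_mem_L }
  exact ⟨_, _, ‹_›, _, G, fun _ _ => rfl, rfl, rfl, fun _ _ => .rfl, fun _ => .rfl, fun _ => .rfl⟩

end OfIsGGGStructure

end GGG

theorem stmt_14 (M N : Type*) [L3G.Structure M] [L3G.Structure N]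
    (hM : L3G.IsGGGStructure M) (hN : L3G.IsGGGStructure N)
    (hQL : (∀ x : M, L3G.inL x) ↔ (∀ x : N, L3G.inL x)) :
    L3G.ElementarilyEquivalent M N := by
  obtain ⟨_, _, _, _, G, hG⟩ := GGG.exists_represents hM
  obtain ⟨_, _, _, _, H, hH⟩ := GGG.exists_represents hN
  have htop : G.L = ⊤ ↔ H.L = ⊤ := by
    simpa only [Submodule.eq_top_iff', ← hG.inL_iff, ← hH.inL_iff] using hQL
  exact (GGG.gradedBackAndForth_agree hG hH htop).elementarilyEquivalent GGG.Agree.nil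
end
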